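/- arXiv:2210.17371 — 2 statements merged into one kernel-verified Lean document; each statement's English description precedes it below -/
import Mathlib

section
/- Let T be a strongly τ₁kt-connected tournament on vertex set V. Then there exist vertex sets S⁺(α), S⁻(α) ⊆ S(α) ⊆ U(α) ⊆ V and X(α) ⊆ V, indexed by a set A₁ of size σ₁kt, and vertices s⁺(α), s⁻(α) ∈ S(α), satisfying: (G1) the sets U(α), α ∈ A₁, are pairwise disjoint; (G2) |S(α)| ≤ ρ and |X(α)| ≤ ρσ₁kt for every α ∈ A₁; (G3) for every α ∈ A₁, u ∈ S⁻(α) and v ∈ S⁺(α), there is a directed path in T[U(α)] from u to v; (G4) every in-neighbour of s⁺(α) lying outside X(α) is an in-neighbour of every vertex of U(α) ∖ S(α), and every out-neighbour of s⁻(α) lying outside X(α) is an out-neighbour of every vertex of U(α) ∖ S(α); (G5) setting V_okay := V ∖ ⋃_α S(α), V_bad⁺ := {u ∈ V_okay : u has no out-neighbour in S⁻(α) for at least kt indices α ∈ A₁} and V_bad⁻ := {u ∈ V_okay : u has no in-neighbour in S⁺(α) for at least kt indices α ∈ A₁}, every u ∈ V_okay has out-degree at least 10^12·|V_bad⁺|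 and in-degree at least 10^12·|V_bad⁻|. -/
open Finset

namespace TournamentPartition

/-! ### Basic constants from the paper -/

def rho : ℕ := 10 ^ 4
def sigma1 : ℕ := 10 ^ 60
def sigma2 : ℕ := 10 ^ 4
def sigma3 : ℕ := 10

/-- `s` contains at least `m` elements satisfying `P`. -/
def ManyIn {α : Type*} (s : Finset α) (m : ℝ) (P : α → Prop) : Prop :=
  ∃ s' : Finset α, s' ⊆ s ∧ m ≤ (s'.card : ℝ) ∧ ∀ x ∈ s', P x

section Defs

variable {V I : Type*}

/-- `E u v` means that the edge between `u` and `v` is directed from `u` to `v`. -/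
def IsTournament (E : V → V → Prop) : Prop :=
  (∀ v, ¬ E v v) ∧ ∀ u v : V, u ≠ v → (E u v ↔ ¬ E v u)

/-- There is a directed path from `u` to `v` all of whose vertices lie in `S`. -/
def ReachWithin (E : V → V → Prop) (S : Set V) (u v : V) : Prop :=
  Relation.ReflTransGen (fun a b => a ∈ S ∧ b ∈ S ∧ E a b) u v

def StronglyConnectedOn (E : V → V → Prop) (S : Set V) : Prop :=
  ∀ u ∈ S, ∀ v ∈ S, ReachWithin E S u v

/-- A directed path, as a list of distinct vertices with consecutive edges. -/
def IsDiPath (E : V → V → Prop) (l : List V) : Prop :=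
  l ≠ [] ∧ l.Nodup ∧ l.Chain' E

variable [Fintype V] [DecidableEq V]

/-- The set `S` induces a strongly `k`-connected subtournament. -/
def StronglyKConnectedOn (E : V → V → Prop) (k : ℕ) (S : Finset V) : Prop :=
  k + 1 ≤ S.card ∧
    ∀ Z : Finset V, Z.card ≤ k → StronglyConnectedOn E ((S \ Z : Finset V) : Set V)

def StronglyKConnected (E : V → V → Prop) (k : ℕ) : Prop :=
  StronglyKConnectedOn E k Finset.univ

def outN (E : V → V → Prop) [DecidableRel E] (u : V) : Finset V :=
  Finset.univ.filter fun v => E u v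

def inN (E : V → V → Prop) [DecidableRel E] (u : V) : Finset V :=
  Finset.univ.filter fun v => E v u

/-- A system of gadgets `U(α)` with special sets `S⁺(α), S⁻(α) ⊆ S(α) ⊆ U(α)`,
exceptional sets `X(α)` and special vertices `s⁺(α), s⁻(α) ∈ S(α)`. -/
structure GadgetSystem (V I : Type*) where
  U : I → Finset V
  S : I → Finset V
  Sp : I → Finset V
  Sm : I → Finset V
  X : I → Finset V
  sp : I → V
  sm : I → V
  sp_mem : ∀ α, sp α ∈ S α
  sm_mem : ∀ α, sm α ∈ S α
  Sp_subset : ∀ α, Sp α ⊆ S α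
  Sm_subset : ∀ α, Sm α ⊆ S α
  S_subset : ∀ α, S α ⊆ U α

variable [Fintype I] [DecidableEq I]

def Vokay (G : GadgetSystem V I) : Finset V :=
  Finset.univ \ Finset.univ.biUnion G.S

/-- Vertices of `V_okay` having no out-neighbour in `S⁻(α)` for at least `k*t` indices `α`. -/
def VbadP (E : V → V → Prop) [DecidableRel E] (G : GadgetSystem V I) (k t : ℕ) : Finset V :=
  (Vokay G).filter fun u =>
    k * t ≤ (Finset.univ.filter fun α : I => ∀ v ∈ G.Sm α, ¬ E u v).card

/-- Vertices of `V_okay` having no in-neighbour in `S⁺(α)` for at least `k*t` indices `α`. -/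
def VbadM (E : V → V → Prop) [DecidableRel E] (G : GadgetSystem V I) (k t : ℕ) : Finset V :=
  (Vokay G).filter fun u =>
    k * t ≤ (Finset.univ.filter fun α : I => ∀ v ∈ G.Sp α, ¬ E v u).card

def Vbad (E : V → V → Prop) [DecidableRel E] (G : GadgetSystem V I) (k t : ℕ) : Finset V :=
  VbadP E G k t ∩ VbadM E G k t

def VgoodP (E : V → V → Prop) [DecidableRel E] (G : GadgetSystem V I) (k t : ℕ) : Finset V :=
  Vokay G \ VbadP E G k t

def VgoodM (E : V → V → Prop) [DecidableRel E] (G : GadgetSystem V I) (k t : ℕ) : Finset V :=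
  Vokay G \ VbadM E G k t

def Vgood (E : V → V → Prop) [DecidableRel E] (G : GadgetSystem V I) (k t : ℕ) : Finset V :=
  VgoodP E G k t ∩ VgoodM E G k t

/-- `W(C) = V ∖ ⋃_{α ∈ C} U(α)`. -/
def Wof (G : GadgetSystem V I) (C : Finset I) : Finset V :=
  Finset.univ \ C.biUnion G.U

def NokayP (E : V → V → Prop) [DecidableRel E] (G : GadgetSystem V I) (u : V) : Finset V :=
  outN E u ∩ Vokay G

def NokayM (E : V → V → Prop) [DecidableRel E] (G : GadgetSystem V I) (u : V) : Finset V :=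
  inN E u ∩ Vokay G

def NgoodP (E : V → V → Prop) [DecidableRel E] (G : GadgetSystem V I) (k t : ℕ) (u : V) :
    Finset V :=
  outN E u ∩ VgoodP E G k t

def NgoodM (E : V → V → Prop) [DecidableRel E] (G : GadgetSystem V I) (k t : ℕ) (u : V) :
    Finset V :=
  inN E u ∩ Vgood E G k t

/-! ### Properties (G1)–(G9) -/

def CondG1 (G : GadgetSystem V I) : Prop :=
  ∀ α β : I, α ≠ β → Disjoint (G.U α) (G.U β)

def CondG2 (G : GadgetSystem V I) (k t : ℕ) : Prop :=
  ∀ α : I, (G.S α).card ≤ rho ∧ (G.X α).card ≤ rho * sigma1 * k * t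

def CondG3 (E : V → V → Prop) (G : GadgetSystem V I) : Prop :=
  ∀ α : I, ∀ u ∈ G.Sm α, ∀ v ∈ G.Sp α, ReachWithin E (G.U α : Set V) u v

def CondG4 (E : V → V → Prop) (G : GadgetSystem V I) : Prop :=
  ∀ α : I, ∀ x : V, x ∉ G.X α →
    (E x (G.sp α) → ∀ u ∈ G.U α \ G.S α, E x u) ∧
    (E (G.sm α) x → ∀ u ∈ G.U α \ G.S α, E u x)

def CondG5 (E : V → V → Prop) [DecidableRel E] (G : GadgetSystem V I) (k t : ℕ) : Prop :=
  ∀ u ∈ Vokay G,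
    10 ^ 12 * (VbadP E G k t).card ≤ (outN E u).card ∧
    10 ^ 12 * (VbadM E G k t).card ≤ (inN E u).card

/-- Properties (G1)–(G5) of a gadget system. -/
def GadgetHyp (E : V → V → Prop) [DecidableRel E] (G : GadgetSystem V I) (k t : ℕ) : Prop :=
  CondG1 G ∧ CondG2 G k t ∧ CondG3 E G ∧ CondG4 E G ∧ CondG5 E G k t

def CondG6 (E : V → V → Prop) [DecidableRel E] (G : GadgetSystem V I) (k t : ℕ) : Prop :=
  (Fintype.card V : ℝ) / 2 ≤ ((Vgood E G k t).card : ℝ)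

def CondG7 (E : V → V → Prop) [DecidableRel E] (G : GadgetSystem V I) (k t τ₁ : ℕ) : Prop :=
  ∀ u ∈ Vokay G,
    max ((10 : ℝ) ^ 11 * ((VbadP E G k t).card : ℝ)) (((τ₁ * k * t : ℕ) : ℝ) / 2)
      ≤ ((outN E u ∩ VgoodP E G k t).card : ℝ)

def CondG8 (E : V → V → Prop) [DecidableRel E] (G : GadgetSystem V I) (k t τ₁ : ℕ) : Prop :=
  ∀ u ∈ Vokay G,
    max ((10 : ℝ) ^ 11 * ((VbadM E G k t).card : ℝ)) (((τ₁ * k * t : ℕ) : ℝ) / 2)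
      ≤ ((inN E u ∩ Vgood E G k t).card : ℝ)

def CondG9 (E : V → V → Prop) [DecidableRel E] (G : GadgetSystem V I) (k t τ₁ : ℕ) : Prop :=
  ∀ u : V,
    max ((10 : ℝ) ^ 11 * (((Finset.univ \ Vokay G).card : ℕ) : ℝ)) (((τ₁ * k * t : ℕ) : ℝ) / 2)
      ≤ ((outN E u ∩ Vokay G).card : ℝ) ∧
    max ((10 : ℝ) ^ 11 * (((Finset.univ \ Vokay G).card : ℕ) : ℝ)) (((τ₁ * k * t : ℕ) : ℝ) / 2)
      ≤ ((inN E u ∩ Vokay G).card : ℝ)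

/-- Properties (G6)–(G9) of a gadget system. -/
def GadgetHyp2 (E : V → V → Prop) [DecidableRel E] (G : GadgetSystem V I) (k t τ₁ : ℕ) :
    Prop :=
  CondG6 E G k t ∧ CondG7 E G k t τ₁ ∧ CondG8 E G k t τ₁ ∧ CondG9 E G k t τ₁

/-! ### Available vertices -/

def AvailA1 (E : V → V → Prop) [DecidableRel E] (G : GadgetSystem V I) (k t : ℕ)
    (W : Finset V) (u : V) : Prop :=
  u ∈ Vgood E G k t ∩ W

def AvailA2 (E : V → V → Prop) [DecidableRel E] (G : GadgetSystem V I) (k t τ₂ : ℕ)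
    (W : Finset V) (u : V) : Prop :=
  u ∈ (VgoodP E G k t \ VgoodM E G k t) ∩ W ∧
    ManyIn (inN E u) ((τ₂ * k * t : ℕ) : ℝ) (AvailA1 E G k t W)

def AvailA3 (E : V → V → Prop) [DecidableRel E] (G : GadgetSystem V I) (k t τ₂ : ℕ)
    (W : Finset V) (u : V) : Prop :=
  u ∈ (VgoodM E G k t \ VgoodP E G k t) ∩ W ∧
    ManyIn (outN E u) ((τ₂ * k * t : ℕ) : ℝ)
      (fun v => AvailA1 E G k t W v ∨ AvailA2 E G k t τ₂ W v)

def AvailA4 (E : V → V → Prop) [DecidableRel E] (G : GadgetSystem V I) (k t τ₂ : ℕ)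
    (W : Finset V) (u : V) : Prop :=
  u ∈ Vbad E G k t ∩ W ∧
    ManyIn (outN E u) ((τ₂ * k * t : ℕ) : ℝ)
      (fun v => AvailA1 E G k t W v ∨ AvailA2 E G k t τ₂ W v) ∧
    ManyIn (inN E u) ((τ₂ * k * t : ℕ) : ℝ) (AvailA1 E G k t W)

/-- `u` is available (for `α`) with respect to a family `𝒜`, where `W = W(𝒜 ∖ {α})`. -/
def Available (E : V → V → Prop) [DecidableRel E] (G : GadgetSystem V I) (k t τ₂ : ℕ)
    (W : Finset V) (u : V) : Prop :=
  AvailA1 E G k t W u ∨ AvailA2 E G k t τ₂ W u ∨ AvailA3 E G k t τ₂ W u ∨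
    AvailA4 E G k t τ₂ W u

/-! ### Eligible and helpful vertices -/

/-- Indices `α ∈ 𝒜` such that `u` has no out-neighbour in `S⁻(α)`. -/
def MissOut (E : V → V → Prop) [DecidableRel E] (G : GadgetSystem V I) (𝒜 : Finset I)
    (u : V) : Finset I :=
  𝒜.filter fun α => ∀ v ∈ G.Sm α, ¬ E u v

/-- Indices `α ∈ 𝒜` such that `u` has no in-neighbour in `S⁺(α)`. -/
def MissIn (E : V → V → Prop) [DecidableRel E] (G : GadgetSystem V I) (𝒜 : Finset I)
    (u : V) : Finset I :=
  𝒜.filter fun α => ∀ v ∈ G.Sp α, ¬ E v u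

def Nice1 (E : V → V → Prop) [DecidableRel E] (G : GadgetSystem V I) (k t : ℕ)
    (𝒜 : Finset I) (W : Finset V) (u : V) : Prop :=
  u ∈ Vgood E G k t ∩ W ∧ (MissOut E G 𝒜 u).card ≤ k ∧ (MissIn E G 𝒜 u).card ≤ k

def Nice2 (E : V → V → Prop) [DecidableRel E] (G : GadgetSystem V I) (k t : ℕ) (m : ℝ)
    (𝒜 : Finset I) (W : Finset V) (u : V) : Prop :=
  u ∈ (VgoodP E G k t \ VgoodM E G k t) ∩ W ∧ (MissOut E G 𝒜 u).card ≤ k ∧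
    ManyIn (inN E u) m (Nice1 E G k t 𝒜 W)

def Nice3 (E : V → V → Prop) [DecidableRel E] (G : GadgetSystem V I) (k t : ℕ) (m : ℝ)
    (𝒜 : Finset I) (W : Finset V) (u : V) : Prop :=
  u ∈ (VgoodM E G k t \ VgoodP E G k t) ∩ W ∧ (MissIn E G 𝒜 u).card ≤ k ∧
    ManyIn (outN E u) m (fun v => Nice1 E G k t 𝒜 W v ∨ Nice2 E G k t m 𝒜 W v)

def Nice4 (E : V → V → Prop) [DecidableRel E] (G : GadgetSystem V I) (k t : ℕ) (m : ℝ)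
    (𝒜 : Finset I) (W : Finset V) (u : V) : Prop :=
  u ∈ Vbad E G k t ∩ W ∧
    ManyIn (inN E u) m (Nice1 E G k t 𝒜 W) ∧
    ManyIn (outN E u) m (fun v => Nice1 E G k t 𝒜 W v ∨ Nice2 E G k t m 𝒜 W v)

def NiceFor (E : V → V → Prop) [DecidableRel E] (G : GadgetSystem V I) (k t : ℕ) (m : ℝ)
    (𝒜 : Finset I) (W : Finset V) (u : V) : Prop :=
  Nice1 E G k t 𝒜 W u ∨ Nice2 E G k t m 𝒜 W u ∨ Nice3 E G k t m 𝒜 W u ∨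
    Nice4 E G k t m 𝒜 W u

/-- `u` is eligible for `𝒜` in `W`. -/
def Eligible (E : V → V → Prop) [DecidableRel E] (G : GadgetSystem V I) (k t τ₃ : ℕ)
    (𝒜 : Finset I) (W : Finset V) (u : V) : Prop :=
  NiceFor E G k t ((τ₃ * k * t : ℕ) : ℝ) 𝒜 W u

/-- `u` is helpful for `𝒜` in `W`. -/
def Helpful (E : V → V → Prop) [DecidableRel E] (G : GadgetSystem V I) (k t : ℕ)
    (𝒜 : Finset I) (W : Finset V) (u : V) : Prop :=
  NiceFor E G k t (k : ℝ) 𝒜 W u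

end Defs

noncomputable def phi0 (τ₁ : ℕ) : ℝ := (τ₁ : ℝ) / 4
noncomputable def phi1 (τ₁ : ℕ) : ℝ := phi0 τ₁ / (2 ^ 6 * (rho : ℝ))
noncomputable def phi2 (τ₁ : ℕ) : ℝ := phi1 τ₁ / (2 ^ 14 * (rho : ℝ) ^ 2)
noncomputable def phi3 (τ₁ : ℕ) : ℝ := phi2 τ₁ / (2 ^ 14 * (rho : ℝ) ^ 2)

/-! ### Small almost dominating sets -/

section Dominating

variable {V : Type*}

theorem IsTournament.flip {E : V → V → Prop} (hE : IsTournament E) :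
    IsTournament (fun u v => E v u) :=
  ⟨hE.1, fun u v huv => hE.2 v u huv.symm⟩

theorem IsTournament.of_not {E : V → V → Prop} (hE : IsTournament E) {u v : V} (huv : u ≠ v)
    (h : ¬ E u v) : E v u :=
  (hE.2 v u huv.symm).2 h

variable [DecidableEq V]

/-- Every nonempty set of vertices of a tournament contains a vertex dominated by at most half
of the set. -/
theorem IsTournament.exists_inDegree_le {E : V → V → Prop} [DecidableRel E]
    (hE : IsTournament E) {M : Finset V} (hM : M.Nonempty) :
    ∃ v ∈ M, 2 * (M.filter fun x => E x v).card ≤ M.card := by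
  have hsum : ∑ v ∈ M, (M.filter fun x => E x v).card ≤
      ∑ v ∈ M, (M.filter fun x => E v x).card :=
    (Finset.sum_card_bipartiteAbove_eq_sum_card_bipartiteBelow (s := M) (t := M) E).symm.le
  obtain ⟨v, hv, hle⟩ := Finset.exists_le_of_sum_le hM hsum
  refine ⟨v, hv, ?_⟩
  have hdisj : Disjoint (M.filter fun x => E x v) (M.filter fun x => E v x) := by
    rw [Finset.disjoint_filter]
    intro x _ hxv hvx
    by_cases h : x = v
    · subst h; exact hE.1 _ hxv
    · exact (hE.2 x v h).1 hxv hvx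
  have hcard := Finset.card_le_card
    (Finset.union_subset (Finset.filter_subset (fun x => E x v) M)
      (Finset.filter_subset (fun x => E v x) M))
  rw [Finset.card_union_of_disjoint hdisj] at hcard
  omega

/-- Inside a set `M` of in-neighbours of `v₀`, at most `c` vertices suffice to dominate all but
a proportion `2⁻ᶜ` of `M`; together with `v₀` they have a common source `s`. -/
theorem IsTournament.exists_dominating_of_inNeighbours {E : V → V → Prop} [DecidableRel E]
    (hE : IsTournament E) (c : ℕ) (M : Finset V) (v₀ : V) (hM : ∀ x ∈ M, E x v₀) :
    ∃ A ⊆ M, A.card ≤ c ∧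
      2 ^ c * (M.filter fun x => x ∉ A ∧ ∀ v ∈ A, ¬ E v x).card ≤ M.card ∧
      ∃ s ∈ insert v₀ A, ∀ v ∈ insert v₀ A, v ≠ s → E s v := by
  induction c generalizing M v₀ with
  | zero =>
    exact ⟨∅, Finset.empty_subset _, by simp, by simp, v₀, by simp, by simp⟩
  | succ c ih =>
    rcases M.eq_empty_or_nonempty with rfl | hne
    · exact ⟨∅, Finset.empty_subset _, by simp, by simp, v₀, by simp, by simp⟩
    obtain ⟨v, hv, hdeg⟩ := hE.exists_inDegree_le hne
    obtain ⟨A, hAM, hAc, hcov, s, hs, hsrc⟩ :=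
      ih (M.filter fun x => E x v) v (fun x hx => (Finset.mem_filter.1 hx).2)
    have hsub : insert v A ⊆ M :=
      Finset.insert_subset hv (hAM.trans (Finset.filter_subset _ _))
    refine ⟨insert v A, hsub, (Finset.card_insert_le _ _).trans (by omega), ?_, s,
      Finset.mem_insert_of_mem hs, ?_⟩
    · have hle : (M.filter fun x => x ∉ insert v A ∧ ∀ w ∈ insert v A, ¬ E w x).card ≤
          ((M.filter fun x => E x v).filter fun x => x ∉ A ∧ ∀ w ∈ A, ¬ E w x).card := by
        apply Finset.card_le_card
        intro x hx
        simp only [Finset.mem_filter, Finset.mem_insert, not_or, forall_eq_or_imp] at hx ⊢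
        exact ⟨⟨hx.1, hE.of_not (Ne.symm hx.2.1.1) hx.2.2.1⟩, hx.2.1.2, hx.2.2.2⟩
      calc 2 ^ (c + 1) * _ ≤ 2 * (2 ^ c * _) := by
            rw [pow_succ]
            exact (Nat.mul_le_mul_left _ hle).trans (le_of_eq (by ring))
        _ ≤ 2 * _ := Nat.mul_le_mul_left _ hcov
        _ ≤ _ := hdeg
    · intro w hw hws
      rcases Finset.mem_insert.1 hw with rfl | hw
      · exact hM _ (hsub hs)
      · exact hsrc w hw hws

/-- Every nonempty set `R` of vertices contains a set `A` of at most `c + 1` vertices with a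
source which leaves at most `2⁻ᶜ` times the minimum in-degree of vertices undominated. -/
theorem IsTournament.exists_dominating {E : V → V → Prop} [DecidableRel E]
    (hE : IsTournament E) (c : ℕ) {R : Finset V} (hR : R.Nonempty) :
    ∃ A ⊆ R, A.card ≤ c + 1 ∧ (∃ s ∈ A, ∀ v ∈ A, v ≠ s → E s v) ∧
      ∀ u ∈ R, 2 ^ c * ((R \ A).filter fun x => ∀ v ∈ A, ¬ E v x).card ≤
        (R.filter fun x => E x u).card := by
  obtain ⟨v, hv, hmin⟩ := R.exists_min_image (fun u => (R.filter fun x => E x u).card) hR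
  obtain ⟨A, hAM, hAc, hcov, hs⟩ := hE.exists_dominating_of_inNeighbours c
    (R.filter fun x => E x v) v (fun x hx => (Finset.mem_filter.1 hx).2)
  refine ⟨insert v A, Finset.insert_subset hv (hAM.trans (Finset.filter_subset _ _)),
    (Finset.card_insert_le _ _).trans (by omega), hs, fun u hu => ?_⟩
  refine le_trans (Nat.mul_le_mul_left _ (Finset.card_le_card ?_)) (hcov.trans (hmin u hu))
  intro x hx
  simp only [Finset.mem_filter, Finset.mem_sdiff, Finset.mem_insert, not_or,
    forall_eq_or_imp] at hx ⊢
  exact ⟨⟨hx.1.1, hE.of_not (Ne.symm hx.1.2.1) hx.2.1⟩, hx.1.2.2, hx.2.2⟩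

/-- Greedy choice of disjoint sets of size at most `m`, each having a property with respect to
the set of vertices left over at the end. -/
theorem exists_disjoint_family [Fintype V] {κ : Type*} [Fintype κ] [DecidableEq κ] (m : ℕ)
    (hm : m * Fintype.card κ < Fintype.card V) (Q : κ → Finset V → Finset V → Prop)
    (hmono : ∀ j O O' A, O' ⊆ O → Q j O A → Q j O' A)
    (hex : ∀ j (R : Finset V), R.Nonempty → ∃ A ⊆ R, A.card ≤ m ∧ Q j (R \ A) A) :
    ∃ F : κ → Finset V, (∀ i j, i ≠ j → Disjoint (F i) (F j)) ∧ (∀ j, (F j).card ≤ m) ∧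
      ∀ j, Q j (univ \ univ.biUnion F) (F j) := by
  suffices h : ∀ s : Finset κ, ∃ F : κ → Finset V,
      (∀ i ∈ s, ∀ j ∈ s, i ≠ j → Disjoint (F i) (F j)) ∧ (∀ j ∈ s, (F j).card ≤ m) ∧
        ∀ j ∈ s, Q j (univ \ s.biUnion F) (F j) by
    obtain ⟨F, h1, h2, h3⟩ := h univ
    exact ⟨F, fun i j => h1 i (mem_univ _) j (mem_univ _), fun j => h2 j (mem_univ _),
      fun j => h3 j (mem_univ _)⟩
  intro s
  induction s using Finset.induction_on with
  | empty => exact ⟨fun _ => ∅, by simp, by simp, by simp⟩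
  | insert a s ha ih =>
    obtain ⟨F, h1, h2, h3⟩ := ih
    have hne : (univ \ s.biUnion F).Nonempty := by
      rw [← Finset.card_pos, Finset.card_sdiff_of_subset (Finset.subset_univ _),
        Finset.card_univ]
      have h4 : (s.biUnion F).card ≤ s.card * m := Finset.card_biUnion_le_card_mul _ _ _ h2
      have h5 : s.card * m ≤ m * Fintype.card κ := by
        rw [mul_comm]; exact Nat.mul_le_mul_left _ (Finset.card_le_univ s)
      omega
    obtain ⟨A, hAR, hAm, hQ⟩ := hex a _ hne
    have hold : ∀ j ∈ s, Function.update F a A j = F j := fun j hj =>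
      Function.update_of_ne (by rintro rfl; exact ha hj) _ _
    have hdis : ∀ j ∈ s, Disjoint A (F j) := fun j hj =>
      Finset.disjoint_of_subset_left hAR <| Finset.disjoint_of_subset_right
        (Finset.subset_biUnion_of_mem F hj) Finset.sdiff_disjoint
    have hunion : (insert a s).biUnion (Function.update F a A) = A ∪ s.biUnion F := by
      rw [Finset.biUnion_insert, Function.update_self,
        Finset.biUnion_congr rfl hold]
    refine ⟨Function.update F a A, ?_, ?_, ?_⟩
    · intro i hi j hj hij
      rcases Finset.mem_insert.1 hi with rfl | hi' <;> rcases Finset.mem_insert.1 hj with rfl | hj'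
      · exact absurd rfl hij
      · rw [Function.update_self, hold j hj']; exact hdis j hj'
      · rw [Function.update_self, hold i hi']; exact (hdis i hi').symm
      · rw [hold i hi', hold j hj']; exact h1 i hi' j hj' hij
    · intro j hj
      rcases Finset.mem_insert.1 hj with rfl | hj'
      · rwa [Function.update_self]
      · rw [hold j hj']; exact h2 j hj'
    · intro j hj
      rw [hunion]
      rcases Finset.mem_insert.1 hj with rfl | hj'
      · rw [Function.update_self]
        refine hmono _ _ _ _ ?_ hQ
        intro x; simp only [mem_sdiff, mem_union, mem_univ, true_and]; tauto
      · rw [hold j hj']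
        refine hmono _ _ _ _ ?_ (h3 j hj')
        intro x; simp only [mem_sdiff, mem_union, mem_univ, true_and]; tauto

end Dominating
/-! ### Linkages and Menger's theorem -/

section Linkage

variable {V ι : Type*}

/-- A directed path in `W` from a vertex of `A` to a vertex of `B`. -/
structure IsPathBetween (E : V → V → Prop) (W A B : Finset V) (l : List V) : Prop where
  chain : l.IsChain E
  nodup : l.Nodup
  mem : ∀ v ∈ l, v ∈ W
  head : ∃ a ∈ A, l.head? = some a
  last : ∃ b ∈ B, l.getLast? = some b

/-- A family of pairwise disjoint directed paths in `W` from `A` to `B`. -/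
structure IsLinkage (E : V → V → Prop) (W A B : Finset V) (P : ι → List V) : Prop where
  path : ∀ i, IsPathBetween E W A B (P i)
  disj : ∀ i j, i ≠ j → ∀ v ∈ P i, v ∉ P j

theorem IsPathBetween.reverse {E : V → V → Prop} {W A B : Finset V} {l : List V}
    (h : IsPathBetween E W A B l) : IsPathBetween (fun u v => E v u) W B A l.reverse where
  chain := List.isChain_reverse.2 h.chain
  nodup := List.nodup_reverse.2 h.nodup
  mem v hv := h.mem v (List.mem_reverse.1 hv)
  head := by simpa using h.last
  last := by simpa using h.head

theorem IsLinkage.reverse {E : V → V → Prop} {W A B : Finset V} {P : ι → List V}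
    (h : IsLinkage E W A B P) : IsLinkage (fun u v => E v u) W B A fun i => (P i).reverse where
  path i := (h.path i).reverse
  disj i j hij v hv hv' := h.disj i j hij v (List.mem_reverse.1 hv) (List.mem_reverse.1 hv')

/-- A bijective form of a path system: an injection of `W \ B` into `W \ A` moving every vertex
along an edge or not at all. -/
theorem exists_injOn_step [DecidableEq V] {E : V → V → Prop} {W A B : Finset V}
    (hA : A ⊆ W) (hB : B ⊆ W) (hAB : A.card = B.card)
    (hconn : ∀ Z : Finset V, Z.card < A.card → StronglyConnectedOn E ((W \ Z : Finset V) : Set V)) :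
    ∃ g : V → V, Set.InjOn g (W \ B : Finset V) ∧
      ∀ v ∈ W \ B, g v ∈ W \ A ∧ (g v = v ∨ E v (g v)) := by
  classical
  let t : {v // v ∈ W \ B} → Finset V := fun v => (W \ A).filter fun w => w = v ∨ E v w
  have hall : ∀ s : Finset {v // v ∈ W \ B}, s.card ≤ (s.biUnion t).card := by
    intro s
    by_contra! hlt
    let Q : Finset V := s.map (Function.Embedding.subtype _)
    have hQmem : ∀ v, v ∈ Q → v ∈ W \ B := fun v hv => Finset.property_of_mem_map_subtype s hv
    have hQcard : Q.card = s.card := Finset.card_map _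
    have ht : ∀ w, w ∈ s.biUnion t ↔ w ∈ W \ A ∧ ∃ v ∈ Q, w = v ∨ E v w := by
      intro w
      simp only [t, Q, mem_biUnion, mem_filter, mem_map, Function.Embedding.coe_subtype]
      constructor
      · rintro ⟨v, hv, hw, h⟩; exact ⟨hw, v, ⟨v, hv, rfl⟩, h⟩
      · rintro ⟨hw, _, ⟨v, hv, rfl⟩, h⟩; exact ⟨v, hv, hw, h⟩
    let Z : Finset V := (s.biUnion t \ Q) ∪ (A \ Q)
    have h1 : Q \ A ⊆ s.biUnion t := by
      intro v hv
      rw [mem_sdiff] at hv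
      exact (ht v).2 ⟨mem_sdiff.2 ⟨(mem_sdiff.1 (hQmem v hv.1)).1, hv.2⟩, v, hv.1, Or.inl rfl⟩
    have h2 : (s.biUnion t \ Q).card + (Q \ A).card ≤ (s.biUnion t).card := by
      rw [← Finset.card_union_of_disjoint
        (Finset.disjoint_of_subset_right Finset.sdiff_subset Finset.sdiff_disjoint)]
      exact Finset.card_le_card (Finset.union_subset Finset.sdiff_subset h1)
    have h3 := Finset.card_sdiff_add_card_inter Q A
    have h4 := Finset.card_sdiff_add_card_inter A Q
    rw [Finset.inter_comm] at h4
    have hZ : Z.card < A.card := by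
      have := Finset.card_union_le (s.biUnion t \ Q) (A \ Q)
      simp only [Z]
      omega
    obtain ⟨a, haA, haZ⟩ : ∃ a ∈ A, a ∉ Z := by
      by_contra! h
      exact absurd (Finset.card_le_card h) (by omega)
    obtain ⟨b, hbB, hbZ⟩ : ∃ b ∈ B, b ∉ Z := by
      by_contra! h
      exact absurd (Finset.card_le_card h) (by omega)
    have haQ : a ∈ Q := by
      by_contra h
      exact haZ (mem_union_right _ (mem_sdiff.2 ⟨haA, h⟩))
    have hstep : ∀ v ∈ Q, ∀ w ∈ W \ Z, E v w → w ∈ Q := by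
      intro v hv w hw hvw
      by_contra hwQ
      rw [mem_sdiff] at hw
      apply hw.2
      by_cases hwA : w ∈ A
      · exact mem_union_right _ (mem_sdiff.2 ⟨hwA, hwQ⟩)
      · exact mem_union_left _ (mem_sdiff.2
          ⟨(ht w).2 ⟨mem_sdiff.2 ⟨hw.1, hwA⟩, v, hv, Or.inr hvw⟩, hwQ⟩)
    have hreach := hconn Z hZ a (Finset.mem_coe.2 (mem_sdiff.2 ⟨hA haA, haZ⟩)) b
      (Finset.mem_coe.2 (mem_sdiff.2 ⟨hB hbB, hbZ⟩))
    have hbQ : b ∈ Q := by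
      clear hbZ hbB
      induction hreach with
      | refl => exact haQ
      | tail _ h ih => exact hstep _ ih _ (Finset.mem_coe.1 h.2.1) h.2.2
    exact (mem_sdiff.1 (hQmem b hbQ)).2 hbB
  obtain ⟨f, hf, hft⟩ := (Finset.all_card_le_biUnion_card_iff_exists_injective t).1 hall
  refine ⟨fun v => if h : v ∈ W \ B then f ⟨v, h⟩ else v, ?_, ?_⟩
  · intro v hv w hw hvw
    rw [Finset.mem_coe] at hv hw
    simp only [dif_pos hv, dif_pos hw] at hvw
    exact congrArg Subtype.val (hf hvw)
  · intro v hv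
    simp only [dif_pos hv]
    exact Finset.mem_filter.1 (hft ⟨v, hv⟩)

/-- Menger's theorem for paths from `A` to `B` inside `W`. -/
theorem exists_isLinkage [DecidableEq V] {E : V → V → Prop} {W A B : Finset V}
    (hA : A ⊆ W) (hB : B ⊆ W) (hAB : A.card = B.card)
    (hconn : ∀ Z : Finset V, Z.card < A.card → StronglyConnectedOn E ((W \ Z : Finset V) : Set V))
    {a : ι → V} (ha : Function.Injective a) (haA : ∀ i, a i ∈ A) :
    ∃ P : ι → List V, IsLinkage E W A B P := by
  obtain ⟨g, hinj, hg⟩ := exists_injOn_step hA hB hAB hconn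
  have key : ∀ p q x y, x ∈ A → y ∈ A → (∀ r < p, g^[r] x ∈ W \ B) → (∀ r < q, g^[r] y ∈ W \ B) →
      g^[p] x = g^[q] y → p = q ∧ x = y := by
    intro p
    induction p with
    | zero =>
      intro q x y hx hy _ hyB h
      cases q with
      | zero => exact ⟨rfl, h⟩
      | succ q =>
        rw [Function.iterate_succ_apply', Function.iterate_zero_apply] at h
        exact absurd (h ▸ hx) (mem_sdiff.1 (hg _ (hyB q (Nat.lt_succ_self q))).1).2
    | succ p ih =>
      intro q x y hx hy hxB hyB h
      cases q with
      | zero =>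
        rw [Function.iterate_succ_apply', Function.iterate_zero_apply] at h
        exact absurd (h ▸ hy) (mem_sdiff.1 (hg _ (hxB p (Nat.lt_succ_self p))).1).2
      | succ q =>
        rw [Function.iterate_succ_apply', Function.iterate_succ_apply'] at h
        have := ih q x y hx hy (fun r hr => hxB r (hr.trans (Nat.lt_succ_self p)))
          (fun r hr => hyB r (hr.trans (Nat.lt_succ_self q)))
          (hinj (Finset.mem_coe.2 (hxB p (Nat.lt_succ_self p)))
            (Finset.mem_coe.2 (hyB q (Nat.lt_succ_self q))) h)
        exact ⟨congrArg _ this.1, this.2⟩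
  have hW : ∀ p x, x ∈ A → (∀ r < p, g^[r] x ∉ B) → g^[p] x ∈ W := by
    intro p x hx
    induction p with
    | zero => exact fun _ => hA hx
    | succ p ih =>
      intro h
      rw [Function.iterate_succ_apply']
      exact (mem_sdiff.1 (hg _ (mem_sdiff.2
        ⟨ih fun r hr => h r (hr.trans (Nat.lt_succ_self p)), h p (Nat.lt_succ_self p)⟩)).1).1
  have hhit : ∀ i, ∃ p, g^[p] (a i) ∈ B := by
    intro i
    by_contra! h
    have hWB : ∀ r, g^[r] (a i) ∈ W \ B := fun r =>
      mem_sdiff.2 ⟨hW r _ (haA i) fun r _ => h r, h r⟩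
    have hinj' : Function.Injective fun p => (⟨g^[p] (a i), hWB p⟩ : {v // v ∈ W \ B}) :=
      fun p q hpq => (key p q _ _ (haA i) (haA i) (fun r _ => hWB r) (fun r _ => hWB r)
        (congrArg Subtype.val hpq)).1
    exact not_injective_infinite_finite _ hinj'
  have hbefore : ∀ i, ∀ p ≤ Nat.find (hhit i), ∀ r < p, g^[r] (a i) ∈ W \ B := by
    intro i p hp r hr
    exact mem_sdiff.2 ⟨hW r _ (haA i) fun s hs => Nat.find_min (hhit i) (hs.trans (hr.trans_le hp)),
      Nat.find_min (hhit i) (hr.trans_le hp)⟩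
  refine ⟨fun i => (List.range (Nat.find (hhit i) + 1)).map fun p => g^[p] (a i), ?_, ?_⟩
  · intro i
    refine ⟨?_, ?_, ?_, ⟨a i, haA i, ?_⟩, ⟨_, Nat.find_spec (hhit i), ?_⟩⟩
    · rw [List.isChain_map, List.isChain_iff_getElem]
      intro p hp
      simp only [List.length_range] at hp
      simp only [List.getElem_range, Function.iterate_succ_apply']
      have hp' : g^[p] (a i) ∈ W \ B := hbefore i (p + 1) (by omega) p (by omega)
      refine (hg _ hp').2.resolve_left fun h => ?_
      rw [← Function.iterate_succ_apply' g] at h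
      have := (key (p + 1) p _ _ (haA i) (haA i) (hbefore i (p + 1) (by omega))
        (hbefore i p (by omega)) h).1
      omega
    · refine List.Nodup.map_on ?_ List.nodup_range
      intro p hp q hq h
      rw [List.mem_range] at hp hq
      exact (key p q _ _ (haA i) (haA i) (hbefore i p (by omega)) (hbefore i q (by omega)) h).1
    · intro v hv
      obtain ⟨p, hp, rfl⟩ := List.mem_map.1 hv
      rw [List.mem_range] at hp
      exact hW p _ (haA i) fun r hr => (mem_sdiff.1 (hbefore i p (by omega) r hr)).2
    · simp [List.range_succ_eq_map]
    · simp [List.range_succ]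
  · intro i j hij v hv hv'
    obtain ⟨p, hp, rfl⟩ := List.mem_map.1 hv
    obtain ⟨q, hq, h⟩ := List.mem_map.1 hv'
    rw [List.mem_range] at hp hq
    exact hij (ha (key p q _ _ (haA i) (haA j) (hbefore i p (by omega)) (hbefore j q (by omega))
      h.symm).2)

end Linkage
/-! ### Rerouting in linkages of minimum total length -/

section Reroute

variable {V ι : Type*} {E : V → V → Prop} {W A A' B B' : Finset V}

theorem IsPathBetween.singleton {x : V} (hx : x ∈ W) : IsPathBetween E W {x} {x} [x] where
  chain := by simp
  nodup := by simp
  mem := by simpa using hx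
  head := by simp
  last := by simp

theorem IsPathBetween.suffix {m r : List V} {y : V} (h : IsPathBetween E W A B (m ++ y :: r)) :
    IsPathBetween E W {y} B (y :: r) where
  chain := (List.isChain_append.1 h.chain).2.1
  nodup := (List.nodup_append.1 h.nodup).2.1
  mem v hv := h.mem v (List.mem_append_right _ hv)
  head := by simp
  last := by simpa [List.getLast?_append, List.getLast?_cons] using h.last

theorem IsPathBetween.splice {m r r' : List V} {u y : V}
    (h : IsPathBetween E W A B' (m ++ u :: r)) (h' : IsPathBetween E W A' B (y :: r'))
    (huy : E u y) (hdisj : ∀ v ∈ m ++ [u], v ∉ y :: r') :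
    IsPathBetween E W A B (m ++ u :: y :: r') where
  chain := by
    have h1 := h.chain
    have h2 := h'.chain
    rw [List.isChain_append] at h1 ⊢
    refine ⟨h1.1, ?_, h1.2.2⟩
    rw [List.isChain_cons]
    exact ⟨by simpa using huy, h2⟩
  nodup := by
    rw [List.append_cons]
    refine List.Nodup.append ?_ h'.nodup hdisj
    have := h.nodup
    rw [List.append_cons] at this
    exact (List.nodup_append.1 this).1
  mem v hv := by
    rw [List.append_cons, List.mem_append] at hv
    rcases hv with hv | hv
    · apply h.mem
      rw [List.append_cons]
      exact List.mem_append_left _ hv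
    · exact h'.mem v hv
  head := by
    obtain ⟨a, ha, hh⟩ := h.head
    refine ⟨a, ha, ?_⟩
    cases m <;> simpa using hh
  last := by
    obtain ⟨b, hb, hh⟩ := h'.last
    refine ⟨b, hb, ?_⟩
    simp [List.getLast?_append, List.getLast?_cons] at hh ⊢
    exact hh

variable [Fintype ι]

/-- A linkage of minimum total length. -/
structure IsMinLinkage (E : V → V → Prop) (W A B : Finset V) (P : ι → List V) : Prop
    extends IsLinkage E W A B P where
  min : ∀ P' : ι → List V, IsLinkage E W A B P' → ∑ i, (P i).length ≤ ∑ i, (P' i).length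

theorem IsLinkage.exists_min {P₀ : ι → List V} (h : IsLinkage E W A B P₀) :
    ∃ P : ι → List V, IsMinLinkage E W A B P := by
  obtain ⟨P, hP, hmin⟩ := exists_minimalFor_of_wellFoundedLT (IsLinkage E W A B)
    (fun P : ι → List V => ∑ i, (P i).length) ⟨P₀, h⟩
  exact ⟨P, hP, fun P' hP' => (le_total _ _).elim id fun h' => hmin hP' h'⟩

theorem IsMinLinkage.reverse {P : ι → List V} (h : IsMinLinkage E W A B P) :
    IsMinLinkage (fun u v => E v u) W B A fun i => (P i).reverse where
  toIsLinkage := h.toIsLinkage.reverse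
  min P' hP' := by simpa using h.min _ hP'.reverse

variable [DecidableEq ι]

theorem sum_length_update (P : ι → List V) (i : ι) (l : List V) :
    (∑ k, (Function.update P i l k).length) + (P i).length = (∑ k, (P k).length) + l.length := by
  rw [← Finset.add_sum_erase _ _ (mem_univ i), ← Finset.add_sum_erase _ (fun k => (P k).length)
    (mem_univ i), Function.update_self, Finset.sum_congr rfl fun k hk => by
      rw [Function.update_of_ne (Finset.ne_of_mem_erase hk)]]
  ring

theorem IsMinLinkage.length_le {P : ι → List V} (h : IsMinLinkage E W A B P) {i : ι} {l : List V}
    (hl : IsPathBetween E W A B l) (hdisj : ∀ k, k ≠ i → ∀ v ∈ l, v ∉ P k) :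
    (P i).length ≤ l.length := by
  have hlink : IsLinkage E W A B (Function.update P i l) := by
    constructor
    · intro k
      rcases eq_or_ne k i with rfl | hk
      · rwa [Function.update_self]
      · rw [Function.update_of_ne hk]; exact h.path k
    · intro j k hjk v hv hv'
      rcases eq_or_ne j i with rfl | hj
      · rw [Function.update_self] at hv
        rw [Function.update_of_ne hjk.symm] at hv'
        exact hdisj k hjk.symm v hv hv'
      · rw [Function.update_of_ne hj] at hv
        rcases eq_or_ne k i with rfl | hk
        · rw [Function.update_self] at hv'
          exact hdisj j hj v hv' hv
        · rw [Function.update_of_ne hk] at hv'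
          exact h.disj j k hjk v hv hv'
  have h1 := h.min _ hlink
  have h2 := sum_length_update P i l
  omega

theorem IsMinLinkage.length_add_length_le {P : ι → List V} (h : IsMinLinkage E W A B P) {i j : ι}
    (hij : i ≠ j) {l l' : List V} (hl : IsPathBetween E W A B l) (hl' : IsPathBetween E W A B l')
    (hdisj : ∀ v ∈ l, v ∉ l') (hlmem : ∀ v ∈ l, v ∈ P i ∨ v ∈ P j)
    (hlmem' : ∀ v ∈ l', v ∈ P i ∨ v ∈ P j) :
    (P i).length + (P j).length ≤ l.length + l'.length := by
  have hout : ∀ k, k ≠ i → k ≠ j → ∀ v, v ∈ P i ∨ v ∈ P j → v ∉ P k := by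
    rintro k hki hkj v (hv | hv)
    · exact h.disj i k hki.symm v hv
    · exact h.disj j k hkj.symm v hv
  have hi : Function.update (Function.update P i l) j l' i = l := by
    rw [Function.update_of_ne hij, Function.update_self]
  have hj : Function.update (Function.update P i l) j l' j = l' := Function.update_self _ _ _
  have hk : ∀ k, k ≠ i → k ≠ j → Function.update (Function.update P i l) j l' k = P k :=
    fun k hki hkj => by rw [Function.update_of_ne hkj, Function.update_of_ne hki]
  have hlink : IsLinkage E W A B (Function.update (Function.update P i l) j l') := by
    constructor
    · intro k
      rcases eq_or_ne k i with rfl | hki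
      · rwa [hi]
      · rcases eq_or_ne k j with rfl | hkj
        · rwa [hj]
        · rw [hk k hki hkj]; exact h.path k
    · intro p q hpq v hv hv'
      rcases eq_or_ne p i with rfl | hpi
      · rw [hi] at hv
        rcases eq_or_ne q j with rfl | hqj
        · rw [hj] at hv'; exact hdisj v hv hv'
        · rw [hk q hpq.symm hqj] at hv'
          exact hout q hpq.symm hqj v (hlmem v hv) hv'
      · rcases eq_or_ne p j with rfl | hpj
        · rw [hj] at hv
          rcases eq_or_ne q i with rfl | hqi
          · rw [hi] at hv'; exact hdisj v hv' hv
          · rw [hk q hqi hpq.symm] at hv'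
            exact hout q hqi hpq.symm v (hlmem' v hv) hv'
        · rw [hk p hpi hpj] at hv
          rcases eq_or_ne q i with rfl | hqi
          · rw [hi] at hv'
            exact hout p hpi hpj v (hlmem v hv') hv
          · rcases eq_or_ne q j with rfl | hqj
            · rw [hj] at hv'
              exact hout p hpi hpj v (hlmem' v hv') hv
            · rw [hk q hqi hqj] at hv'
              exact h.disj p q hpq v hv hv'
  have h1 := h.min _ hlink
  have h2 := sum_length_update P i l
  have h3 := sum_length_update (Function.update P i l) j l'
  rw [Function.update_of_ne hij.symm] at h3
  omega

theorem exists_eq_append_of_notMem_take_reverse {l : List V} {u s : V} (hu : u ∈ l)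
    (hu' : u ∉ l.reverse.take 3) (hs : l.getLast? = some s) :
    ∃ m r, l = m ++ u :: (r ++ [s]) ∧ 2 ≤ r.length := by
  obtain ⟨m, r, rfl⟩ := List.append_of_mem hu
  have hr : 3 ≤ r.length := by
    by_contra! h
    apply hu'
    rw [List.reverse_append, List.reverse_cons, List.append_assoc, List.take_append]
    refine List.mem_append_right _ ?_
    rw [List.length_reverse, List.singleton_append]
    obtain ⟨n, hn⟩ : ∃ n, 3 - r.length = n + 1 := ⟨2 - r.length, by omega⟩
    rw [hn, List.take_succ_cons]
    exact List.mem_cons_self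
  rcases List.eq_nil_or_concat r with rfl | ⟨r', s', rfl⟩
  · simp at hr
  · rw [List.concat_eq_append] at hs hr ⊢
    have : s' = s := by
      rw [← List.cons_append, ← List.append_assoc, List.getLast?_append] at hs
      simpa using hs
    subst this
    refine ⟨m, r', rfl, ?_⟩
    simp at hr
    omega

theorem exists_eq_append_of_ne {l : List V} {x y : V} (hx : x ∈ l) (hy : y ∈ l) (hxy : x ≠ y) :
    ∃ m₁ m₂ m₃, l = m₁ ++ x :: (m₂ ++ y :: m₃) ∨ l = m₁ ++ y :: (m₂ ++ x :: m₃) := by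
  obtain ⟨m, r, rfl⟩ := List.append_of_mem hx
  rcases List.mem_append.1 hy with hy | hy
  · obtain ⟨m₁, m₂, rfl⟩ := List.append_of_mem hy
    exact ⟨m₁, m₂, r, Or.inr (by simp)⟩
  · obtain ⟨m₂, m₃, rfl⟩ := List.append_of_mem (List.mem_of_ne_of_mem hxy.symm hy)
    exact ⟨m, m₂, m₃, Or.inl rfl⟩

/-- In a minimum linkage, an in-neighbour of the last vertex `s` of a path dominates all but the
last three vertices of this path, with at most one exception on each other path. -/
theorem IsMinLinkage.exists_exceptions [Fintype V] [DecidableEq V] (hE : IsTournament E)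
    {P : ι → List V}
    (h : IsMinLinkage E W A B P) {i : ι} {s : V} (hs : (P i).getLast? = some s) :
    ∃ Y : Finset V, Y.card ≤ Fintype.card ι ∧
      ∀ x ∈ W, x ∉ Y → x ∉ (P i).reverse.take 3 → E x s →
        ∀ u ∈ P i, u ∉ (P i).reverse.take 3 → E x u := by
  classical
  have hswap : ∀ j, i ≠ j → ∀ x y u m₁ m₂ m₃, P j = m₁ ++ x :: (m₂ ++ y :: m₃) → E x s →
      E u y → u ∈ P i → u ∉ (P i).reverse.take 3 → False := by
    intro j hij x y u m₁ m₂ m₃ hPj hxs huy hu hu'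
    obtain ⟨m, r, hPi, hr⟩ := exists_eq_append_of_notMem_take_reverse hu hu' hs
    have hpi := h.path i
    have hpj := h.path j
    have hdis := h.disj i j hij
    rw [hPj] at hpj
    rw [hPi] at hpi
    rw [hPi, hPj] at hdis
    have hsuf : IsPathBetween E W {s} B [s] := by
      refine IsPathBetween.suffix (A := A) (m := m ++ u :: r) ?_
      simpa using hpi
    have hsuf' : IsPathBetween E W {y} B (y :: m₃) := by
      refine IsPathBetween.suffix (A := A) (m := m₁ ++ x :: m₂) ?_
      simpa using hpj
    have hn := hpi.nodup
    have hn' := hpj.nodup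
    have h1 : IsPathBetween E W A B (m ++ u :: y :: m₃) := by
      refine hpi.splice hsuf' huy fun v hv hv' => hdis v ?_ ?_ <;> grind
    have h2 : IsPathBetween E W A B (m₁ ++ x :: [s]) := by
      refine hpj.splice hsuf hxs fun v hv hv' => hdis v ?_ ?_ <;> grind
    have := h.length_add_length_le hij h1 h2 (by
      intro v hv hv'
      have hvi : v ∈ m ++ u :: (r ++ [s]) → v ∈ m₁ ++ x :: (m₂ ++ y :: m₃) → False :=
        hdis v
      simp only [List.nodup_append, List.nodup_cons] at hn hn'
      grind) (by rw [hPi, hPj]; grind) (by rw [hPi, hPj]; grind)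
    rw [hPi, hPj] at this
    simp only [List.length_append, List.length_cons, List.length_nil] at this
    omega
  let Y : ι → Finset V := fun j => if i = j then ∅ else
    univ.filter fun x => x ∈ P j ∧ E x s ∧ ∃ u ∈ P i, u ∉ (P i).reverse.take 3 ∧ E u x
  refine ⟨univ.biUnion Y, ?_, ?_⟩
  · refine (Finset.card_biUnion_le_card_mul _ _ 1 ?_).trans (by simp)
    intro j _
    by_cases hij : i = j
    · simp [Y, hij]
    rw [Finset.card_le_one]
    intro x hx y hy
    simp only [Y, if_neg hij, mem_filter, mem_univ, true_and] at hx hy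
    by_contra hxy
    obtain ⟨hxP, hxs, u, hu, hu', hux⟩ := hx
    obtain ⟨hyP, hys, w, hw, hw', hwy⟩ := hy
    obtain ⟨m₁, m₂, m₃, hP | hP⟩ := exists_eq_append_of_ne hxP hyP hxy
    · exact hswap j hij x y w m₁ m₂ m₃ hP hxs hwy hw hw'
    · exact hswap j hij y x u m₁ m₂ m₃ hP hys hux hu hu'
  · intro x hxW hxY hx3 hxs u hu hu'
    obtain ⟨m, r, hPi, hr⟩ := exists_eq_append_of_notMem_take_reverse hu hu' hs
    have hpi := h.path i
    by_cases hxi : x ∈ P i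
    · exfalso
      obtain ⟨m', r', hPi', hr'⟩ := exists_eq_append_of_notMem_take_reverse hxi hx3 hs
      rw [hPi'] at hpi
      have hsuf : IsPathBetween E W {s} B [s] := by
        refine IsPathBetween.suffix (A := A) (m := m' ++ x :: r') ?_
        simpa using hpi
      have hn := hpi.nodup
      have h1 : IsPathBetween E W A B (m' ++ x :: [s]) := by
        refine hpi.splice hsuf hxs fun v hv hv' => ?_
        simp only [List.nodup_append, List.nodup_cons] at hn
        grind
      have := h.length_le (i := i) h1 fun k hk v hv => h.disj i k hk.symm v (by
        rw [hPi']; grind)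
      rw [hPi'] at this
      simp only [List.length_append, List.length_cons, List.length_nil] at this
      omega
    have hxu : x ≠ u := fun hxu => hxi (hxu ▸ hu)
    by_contra hnot
    have hux : E u x := hE.of_not hxu hnot
    have hxj : ∀ j, x ∉ P j := by
      intro j hj
      have hij : i ≠ j := fun hij => hxi (hij ▸ hj)
      refine hxY (mem_biUnion.2 ⟨j, mem_univ _, ?_⟩)
      simp only [Y, if_neg hij, mem_filter, mem_univ, true_and]
      exact ⟨hj, hxs, u, hu, hu', hux⟩
    rw [hPi] at hpi hxi
    have hsuf : IsPathBetween E W {s} B [s] := by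
      refine IsPathBetween.suffix (A := A) (m := m ++ u :: r) ?_
      simpa using hpi
    have h0 : IsPathBetween E W {x} B ([] ++ x :: [s]) :=
      (IsPathBetween.singleton hxW).splice (m := []) (r := []) hsuf hxs (by grind)
    have hn := hpi.nodup
    have h1 : IsPathBetween E W A B (m ++ u :: x :: [s]) := by
      refine hpi.splice h0 hux fun v hv hv' => ?_
      simp only [List.nodup_append, List.nodup_cons] at hn
      grind
    have := h.length_le (i := i) h1 fun k hk v hv => by
      by_cases hvx : v = x
      · rw [hvx]; exact hxj k
      · exact h.disj i k hk.symm v (by rw [hPi]; grind)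
    rw [hPi] at this
    simp only [List.length_append, List.length_cons, List.length_nil] at this
    omega

end Reroute

/-! ### Construction of the gadgets -/

section Construction

variable {V ι : Type*}

theorem reflTransGen_of_isChain {R : V → V → Prop} {l : List V} (hl : l.IsChain R) {a b : V}
    (ha : l.head? = some a) (hb : l.getLast? = some b) : Relation.ReflTransGen R a b := by
  induction l generalizing a with
  | nil => simp at ha
  | cons x l ih =>
    obtain rfl : x = a := by simpa using ha
    rw [List.isChain_cons] at hl
    cases l with
    | nil =>
      obtain rfl : x = b := by simpa using hb
      exact .refl
    | cons y l =>
      exact .head (hl.1 y (by simp)) (ih hl.2 (by simp) (by simpa using hb))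

theorem reachWithin_of_isChain {E : V → V → Prop} {S : Set V} {l : List V} (hl : l.IsChain E)
    (hS : ∀ v ∈ l, v ∈ S) {a b : V} (ha : l.head? = some a) (hb : l.getLast? = some b) :
    ReachWithin E S a b := by
  refine reflTransGen_of_isChain ?_ ha hb
  exact (List.isChain_iff_getElem.2 fun i hi =>
    ⟨hS _ (List.getElem_mem _), hS _ (List.getElem_mem _), List.isChain_iff_getElem.1 hl i hi⟩)

theorem card_toFinset_take_le [DecidableEq V] (l : List V) (n : ℕ) : (l.take n).toFinset.card ≤ n :=
  (List.toFinset_card_le _).trans (List.length_take_le _ _)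

/-- If every index is missed by at most `e` vertices, few vertices miss many indices. -/
theorem card_filter_many_mul_le [Fintype ι] (O : Finset V) (p : V → ι → Prop) [∀ u i, Decidable (p u i)]
    (m e f : ℕ) (he : ∀ i, f * (O.filter fun u => p u i).card ≤ e) :
    f * (O.filter fun u => m ≤ (univ.filter fun i => p u i).card).card * m ≤
      Fintype.card ι * e := by
  have h1 : (O.filter fun u => m ≤ (univ.filter fun i => p u i).card).card * m ≤
      ∑ i, (O.filter fun u => p u i).card := by
    calc _ ≤ ∑ u ∈ O.filter (fun u => m ≤ (univ.filter fun i => p u i).card),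
          (univ.filter fun i => p u i).card := by
          rw [← smul_eq_mul]
          exact Finset.card_nsmul_le_sum _ _ _ fun u hu => (Finset.mem_filter.1 hu).2
      _ ≤ ∑ u ∈ O, (univ.filter fun i => p u i).card :=
          Finset.sum_le_sum_of_subset (Finset.filter_subset _ _)
      _ = _ := Finset.sum_card_bipartiteAbove_eq_sum_card_bipartiteBelow p
  calc _ = f * ((O.filter fun u => m ≤ (univ.filter fun i => p u i).card).card * m) := by ring
    _ ≤ f * ∑ i, (O.filter fun u => p u i).card := Nat.mul_le_mul_left _ h1
    _ = ∑ i, f * (O.filter fun u => p u i).card := Finset.mul_sum _ _ _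
    _ ≤ ∑ _i : ι, e := Finset.sum_le_sum fun i _ => he i
    _ = _ := by simp

variable [Fintype V] [DecidableEq V] [Fintype ι] [DecidableEq ι]

/-- Disjoint small sets `Sp i` with a source `b i` and `Sm i` with a sink `a i`, almost dominating,
respectively almost dominated by, the vertices outside all of these sets. -/
theorem IsTournament.exists_dominating_families {E : V → V → Prop} [DecidableRel E]
    (hE : IsTournament E) (c : ℕ) (hcard : (c + 1) * (2 * Fintype.card ι) < Fintype.card V) :
    ∃ F : ι ⊕ ι → Finset V, (∀ i j, i ≠ j → Disjoint (F i) (F j)) ∧ (∀ j, (F j).card ≤ c + 1) ∧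
      (∀ i, (∃ s ∈ F (.inl i), ∀ v ∈ F (.inl i), v ≠ s → E v s) ∧
        ∀ u ∈ univ \ univ.biUnion F,
          2 ^ c * ((univ \ univ.biUnion F).filter fun x => ∀ v ∈ F (.inl i), ¬ E x v).card ≤
            (outN E u).card) ∧
      ∀ i, (∃ s ∈ F (.inr i), ∀ v ∈ F (.inr i), v ≠ s → E s v) ∧
        ∀ u ∈ univ \ univ.biUnion F,
          2 ^ c * ((univ \ univ.biUnion F).filter fun x => ∀ v ∈ F (.inr i), ¬ E v x).card ≤
            (inN E u).card := by
  let Q : ι ⊕ ι → Finset V → Finset V → Prop := Sum.elim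
    (fun _ O A => (∃ s ∈ A, ∀ v ∈ A, v ≠ s → E v s) ∧
      ∀ u ∈ O, 2 ^ c * (O.filter fun x => ∀ v ∈ A, ¬ E x v).card ≤ (outN E u).card)
    (fun _ O A => (∃ s ∈ A, ∀ v ∈ A, v ≠ s → E s v) ∧
      ∀ u ∈ O, 2 ^ c * (O.filter fun x => ∀ v ∈ A, ¬ E v x).card ≤ (inN E u).card)
  obtain ⟨F, h1, h2, h3⟩ := exists_disjoint_family (κ := ι ⊕ ι) (c + 1)
    (by rw [Fintype.card_sum, ← two_mul]; exact hcard) Q (by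
      rintro (j | j) O O' A hO ⟨hs, hd⟩ <;>
      exact ⟨hs, fun u hu => (Nat.mul_le_mul_left _ (Finset.card_le_card
        (Finset.filter_subset_filter _ hO))).trans (hd u (hO hu))⟩) (by
      rintro (j | j) R hR
      · obtain ⟨A, hAR, hA, hs, hd⟩ := hE.flip.exists_dominating c hR
        refine ⟨A, hAR, hA, hs, fun u hu => ?_⟩
        have hle : (R.filter fun x => E u x).card ≤ (outN E u).card :=
          Finset.card_le_card (Finset.filter_subset_filter _ (Finset.subset_univ _))
        convert Nat.le_trans (hd u (Finset.sdiff_subset hu)) hle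
      · obtain ⟨A, hAR, hA, hs, hd⟩ := hE.exists_dominating c hR
        refine ⟨A, hAR, hA, hs, fun u hu => ?_⟩
        have hle : (R.filter fun x => E x u).card ≤ (inN E u).card :=
          Finset.card_le_card (Finset.filter_subset_filter _ (Finset.subset_univ _))
        convert Nat.le_trans (hd u (Finset.sdiff_subset hu)) hle)
  exact ⟨F, h1, h2, fun i => h3 (.inl i), fun i => h3 (.inr i)⟩

theorem IsTournament.exists_gadgetSystem {E : V → V → Prop} [DecidableRel E]
    (hE : IsTournament E) (c : ℕ) (hcard : (c + 1) * (2 * Fintype.card ι) < Fintype.card V)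
    (hconn : ∀ Z : Finset V, Z.card ≤ (2 * c + 3) * Fintype.card ι →
      StronglyConnectedOn E ((univ \ Z : Finset V) : Set V)) :
    ∃ G : GadgetSystem V ι, CondG1 G ∧
      (∀ α, (G.S α).card ≤ 2 * c + 8 ∧ (G.X α).card ≤ (2 * c + 4) * Fintype.card ι + 6) ∧
      CondG3 E G ∧ CondG4 E G ∧ ∀ α, ∀ u ∈ Vokay G,
        2 ^ c * ((Vokay G).filter fun x => ∀ v ∈ G.Sm α, ¬ E x v).card ≤ (outN E u).card ∧
        2 ^ c * ((Vokay G).filter fun x => ∀ v ∈ G.Sp α, ¬ E v x).card ≤ (inN E u).card := by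
  obtain ⟨F, hFdisj, hFcard, hFm, hFp⟩ := hE.exists_dominating_families (ι := ι) c hcard
  choose a ha hsink using fun i => (hFm i).1
  choose b hb hsource using fun i => (hFp i).1
  have hFeq : ∀ p q v, v ∈ F p → v ∈ F q → p = q := by
    intro p q v hp hq
    by_contra h
    exact Finset.disjoint_left.1 (hFdisj p q h) hp hq
  have hainj : Function.Injective a := fun i j h =>
    Sum.inl_injective (hFeq _ _ _ (ha i) (h ▸ ha j))
  have hbinj : Function.Injective b := fun i j h =>
    Sum.inr_injective (hFeq _ _ _ (hb i) (h ▸ hb j))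
  set D : Finset V := univ.biUnion F with hD
  have hFD : ∀ p, F p ⊆ D := fun p => Finset.subset_biUnion_of_mem F (mem_univ p)
  have hDcard : D.card ≤ (2 * c + 2) * Fintype.card ι := by
    refine (Finset.card_biUnion_le_card_mul _ _ _ fun p _ => hFcard p).trans (le_of_eq ?_)
    rw [Finset.card_univ, Fintype.card_sum]
    ring
  let A : Finset V := univ.image a
  let B : Finset V := univ.image b
  have hAcard : A.card = Fintype.card ι := Finset.card_image_of_injective _ hainj
  have hBcard : B.card = Fintype.card ι := Finset.card_image_of_injective _ hbinj
  let W : Finset V := univ \ (D \ (A ∪ B))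
  have hWD : ∀ v ∈ W, v ∈ D → v ∈ A ∪ B := by
    intro v hv hvD
    by_contra h
    exact (mem_sdiff.1 hv).2 (mem_sdiff.2 ⟨hvD, h⟩)
  have hWout : ∀ v, v ∉ D → v ∈ W := fun v hv =>
    mem_sdiff.2 ⟨mem_univ _, fun h => hv (mem_sdiff.1 h).1⟩
  have hABW : A ∪ B ⊆ W := fun v hv => mem_sdiff.2 ⟨mem_univ _, fun h => (mem_sdiff.1 h).2 hv⟩
  obtain ⟨P₀, hP₀⟩ := exists_isLinkage (E := E) (Finset.subset_union_left.trans hABW)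
    (Finset.subset_union_right.trans hABW) (hAcard.trans hBcard.symm) (fun Z hZ => by
      have heq : W \ Z = univ \ (D \ (A ∪ B) ∪ Z) := sdiff_sdiff_left
      rw [heq]
      apply hconn
      have h1 := Finset.card_union_le (D \ (A ∪ B)) Z
      have h2 := Finset.card_le_card (Finset.sdiff_subset : D \ (A ∪ B) ⊆ D)
      have h3 : (2 * c + 3) * Fintype.card ι = (2 * c + 2) * Fintype.card ι + Fintype.card ι := by
        ring
      omega) hainj (fun i => Finset.mem_image_of_mem a (mem_univ i))
  obtain ⟨P, hP⟩ := hP₀.exists_min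
  have hheads : ∀ i, ∃ j, (P i).head? = some (a j) := by
    intro i
    obtain ⟨x, hx, h⟩ := (hP.path i).head
    obtain ⟨j, _, rfl⟩ := mem_image.1 hx
    exact ⟨j, h⟩
  have hlasts : ∀ i, ∃ j, (P i).getLast? = some (b j) := by
    intro i
    obtain ⟨x, hx, h⟩ := (hP.path i).last
    obtain ⟨j, _, rfl⟩ := mem_image.1 hx
    exact ⟨j, h⟩
  choose σ hσ using hheads
  choose τ hτ using hlasts
  have haP : ∀ i, a (σ i) ∈ P i := fun i => List.mem_of_head? (hσ i)
  have hbP : ∀ i, b (τ i) ∈ P i := fun i => List.mem_of_getLast? (hτ i)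
  have hPeq : ∀ i j v, v ∈ P i → v ∈ P j → i = j := by
    intro i j v hi hj
    by_contra h
    exact hP.disj i j h v hi hj
  have hσinj : Function.Injective σ := fun i j h => hPeq i j _ (haP i) (h ▸ haP j)
  have hτinj : Function.Injective τ := fun i j h => hPeq i j _ (hbP i) (h ▸ hbP j)
  have hσsurj : Function.Surjective σ := Finite.surjective_of_injective hσinj
  have hτsurj : Function.Surjective τ := Finite.surjective_of_injective hτinj
  have hPm : ∀ i j v, v ∈ P i → v ∈ F (.inl (σ j)) → i = j := by
    intro i j v hv hvF
    rcases mem_union.1 (hWD v ((hP.path i).mem v hv) (hFD _ hvF)) with h | h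
    · obtain ⟨l, _, rfl⟩ := mem_image.1 h
      obtain rfl := Sum.inl_injective (hFeq _ _ _ (ha l) hvF)
      exact hPeq i j _ hv (haP j)
    · obtain ⟨l, _, rfl⟩ := mem_image.1 h
      exact absurd (hFeq _ _ _ (hb l) hvF) (by simp)
  have hPp : ∀ i j v, v ∈ P i → v ∈ F (.inr (τ j)) → i = j := by
    intro i j v hv hvF
    rcases mem_union.1 (hWD v ((hP.path i).mem v hv) (hFD _ hvF)) with h | h
    · obtain ⟨l, _, rfl⟩ := mem_image.1 h
      exact absurd (hFeq _ _ _ (ha l) hvF) (by simp)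
    · obtain ⟨l, _, rfl⟩ := mem_image.1 h
      obtain rfl := Sum.inr_injective (hFeq _ _ _ (hb l) hvF)
      exact hPeq i j _ hv (hbP j)
  choose Yp hYp hexcp using fun i => hP.exists_exceptions hE (hτ i)
  choose Ym hYm hexcm using fun i => hP.reverse.exists_exceptions hE.flip (i := i)
    (s := a (σ i)) (by rw [List.getLast?_reverse, hσ i])
  let T : ι → Finset V := fun i => ((P i).take 3).toFinset ∪ ((P i).reverse.take 3).toFinset
  have hTP : ∀ i, T i ⊆ (P i).toFinset := by
    intro i v hv
    simp only [T, mem_union, List.mem_toFinset] at hv ⊢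
    rcases hv with hv | hv
    · exact List.mem_of_mem_take hv
    · exact List.mem_reverse.1 (List.mem_of_mem_take hv)
  have hTcard : ∀ i, (T i).card ≤ 6 := fun i => (Finset.card_union_le _ _).trans
    (Nat.add_le_add (card_toFinset_take_le _ 3) (card_toFinset_take_le _ 3))
  let G : GadgetSystem V ι :=
    { U := fun i => F (.inl (σ i)) ∪ F (.inr (τ i)) ∪ (P i).toFinset
      S := fun i => F (.inl (σ i)) ∪ F (.inr (τ i)) ∪ T i
      Sp := fun i => F (.inr (τ i))
      Sm := fun i => F (.inl (σ i))
      X := fun i => D ∪ T i ∪ (Yp i ∪ Ym i)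
      sp := fun i => b (τ i)
      sm := fun i => a (σ i)
      sp_mem := fun i => mem_union_left _ (mem_union_right _ (hb _))
      sm_mem := fun i => mem_union_left _ (mem_union_left _ (ha _))
      Sp_subset := fun i => Finset.subset_union_right.trans Finset.subset_union_left
      Sm_subset := fun i => Finset.subset_union_left.trans Finset.subset_union_left
      S_subset := fun i => Finset.union_subset_union_right (hTP i) }
  refine ⟨G, ?_, ?_, ?_, ?_, ?_⟩
  · intro i j hij
    rw [Finset.disjoint_left]
    intro v hv hv'
    apply hij
    simp only [G, mem_union, List.mem_toFinset] at hv hv'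
    rcases hv with (hv | hv) | hv <;> rcases hv' with (hv' | hv') | hv'
    · exact hσinj (Sum.inl_injective (hFeq _ _ _ hv hv'))
    · exact absurd (hFeq _ _ _ hv hv') (by simp)
    · exact (hPm _ _ _ hv' hv).symm
    · exact absurd (hFeq _ _ _ hv hv') (by simp)
    · exact hτinj (Sum.inr_injective (hFeq _ _ _ hv hv'))
    · exact (hPp _ _ _ hv' hv).symm
    · exact hPm _ _ _ hv hv'
    · exact hPp _ _ _ hv hv'
    · exact hPeq _ _ _ hv hv'
  · intro i
    have h1 := Finset.card_union_le (F (.inl (σ i)) ∪ F (.inr (τ i))) (T i)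
    have h2 := Finset.card_union_le (F (.inl (σ i))) (F (.inr (τ i)))
    have h3 := hFcard (.inl (σ i))
    have h4 := hFcard (.inr (τ i))
    have h5 := hTcard i
    have h6 := Finset.card_union_le (D ∪ T i) (Yp i ∪ Ym i)
    have h7 := Finset.card_union_le D (T i)
    have h8 := Finset.card_union_le (Yp i) (Ym i)
    have h9 := hYp i
    have h10 := hYm i
    have h11 : (2 * c + 4) * Fintype.card ι =
        (2 * c + 2) * Fintype.card ι + (Fintype.card ι + Fintype.card ι) := by ring
    simp only [G]
    constructor <;> omega
  · intro i u hu v hv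
    have hpath : ReachWithin E (G.U i : Set V) (a (σ i)) (b (τ i)) :=
      reachWithin_of_isChain (hP.path i).chain
        (fun w hw => Finset.mem_coe.2 (mem_union_right _ (List.mem_toFinset.2 hw))) (hσ i) (hτ i)
    have hmemU : ∀ w ∈ G.S i, w ∈ (G.U i : Set V) := fun w hw => Finset.mem_coe.2 (G.S_subset i hw)
    have hstart : ReachWithin E (G.U i : Set V) u (a (σ i)) := by
      by_cases h : u = a (σ i)
      · rw [h]; exact .refl
      · exact .single ⟨hmemU u (G.Sm_subset i hu), hmemU _ (G.sm_mem i), hsink _ u hu h⟩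
    have hend : ReachWithin E (G.U i : Set V) (b (τ i)) v := by
      by_cases h : v = b (τ i)
      · rw [h]; exact .refl
      · exact .single ⟨hmemU _ (G.sp_mem i), hmemU v (G.Sp_subset i hv), hsource _ v hv h⟩
    exact (hstart.trans hpath).trans hend
  · intro i x hx
    simp only [G, T, mem_union, List.mem_toFinset, not_or] at hx
    obtain ⟨⟨hxD, hxt, hxr⟩, hxp, hxm⟩ := hx
    have hU : ∀ u ∈ G.U i \ G.S i, u ∈ P i ∧ u ∉ (P i).take 3 ∧ u ∉ (P i).reverse.take 3 := by
      intro u hu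
      simp only [G, T, mem_sdiff, mem_union, List.mem_toFinset] at hu
      tauto
    refine ⟨fun hxs u hu => ?_, fun hsx u hu => ?_⟩
    · obtain ⟨h1, -, h3⟩ := hU u hu
      exact hexcp i x (hWout x hxD) hxp hxr hxs u h1 h3
    · obtain ⟨h1, h2, -⟩ := hU u hu
      exact hexcm i x (hWout x hxD) hxm (by rwa [List.reverse_reverse]) hsx u
        (List.mem_reverse.2 h1) (by rwa [List.reverse_reverse])
  · have hsub : Vokay G ⊆ univ \ D := by
      intro v hv
      refine mem_sdiff.2 ⟨mem_univ _, fun hvD => (mem_sdiff.1 hv).2 ?_⟩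
      obtain ⟨p | p, _, hp⟩ := mem_biUnion.1 hvD
      · obtain ⟨i, rfl⟩ := hσsurj p
        exact mem_biUnion.2 ⟨i, mem_univ _, G.Sm_subset i hp⟩
      · obtain ⟨i, rfl⟩ := hτsurj p
        exact mem_biUnion.2 ⟨i, mem_univ _, G.Sp_subset i hp⟩
    intro i u hu
    exact ⟨(Nat.mul_le_mul_left _ (Finset.card_le_card (Finset.filter_subset_filter _ hsub))).trans
        ((hFm _).2 u (hsub hu)),
      (Nat.mul_le_mul_left _ (Finset.card_le_card (Finset.filter_subset_filter _ hsub))).trans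
        ((hFp _).2 u (hsub hu))⟩

end Construction

/-- Proposition 4.2: construction of the gadgets, properties (G1)–(G5). -/
theorem statement3 :
    ∃ C : ℕ, ∀ (τ₁ k t : ℕ), C ≤ τ₁ → C * τ₁ ≤ k → 2 ≤ t →
      ∀ (V : Type) [Fintype V] [DecidableEq V] (E : V → V → Prop) [DecidableRel E],
        IsTournament E → StronglyKConnected E (τ₁ * k * t) →
        ∃ G : GadgetSystem V (Fin (sigma1 * k * t)), GadgetHyp E G k t := by
  refine ⟨10 ^ 63, fun τ₁ k t hτ hk ht V _ _ E _ hE hconn => ?_⟩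
  have hkt : 0 < k * t := by
    refine Nat.mul_pos (lt_of_lt_of_le ?_ hk) (by omega)
    exact Nat.mul_pos (by norm_num) (lt_of_lt_of_le (by norm_num) hτ)
  have hN : Fintype.card (Fin (sigma1 * k * t)) = 10 ^ 60 * (k * t) := by
    rw [Fintype.card_fin, sigma1, mul_assoc]
  have hbig : 10 ^ 63 * (k * t) ≤ τ₁ * k * t := by
    rw [mul_assoc]
    exact Nat.mul_le_mul_right _ hτ
  obtain ⟨hV, hconn⟩ := hconn
  rw [Finset.card_univ] at hV
  obtain ⟨G, h1, h2, h3, h4, h5⟩ := hE.exists_gadgetSystem (ι := Fin (sigma1 * k * t)) 250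
    (by rw [hN]; omega) (fun Z hZ => hconn Z (by rw [hN] at hZ; omega))
  have hdeg : ∀ n d : ℕ, 2 ^ 250 * n * (k * t) ≤ 10 ^ 60 * (k * t) * d → 10 ^ 12 * n ≤ d := by
    intro n d h
    have h' : 2 ^ 250 * n ≤ 10 ^ 60 * d :=
      Nat.le_of_mul_le_mul_right (h.trans (le_of_eq (by ring))) hkt
    omega
  refine ⟨G, h1, fun α => ?_, h3, h4, fun u hu => ?_⟩
  · obtain ⟨hS, hX⟩ := h2 α
    rw [hN] at hX
    refine ⟨hS.trans (by norm_num [rho]), ?_⟩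
    have hρ : rho * sigma1 * k * t = 10 ^ 4 * (10 ^ 60 * (k * t)) := by
      simp only [rho, sigma1, mul_assoc]
    rw [hρ]
    omega
  · constructor
    · apply hdeg
      rw [← hN]
      exact card_filter_many_mul_le (Vokay G) (fun u α => ∀ v ∈ G.Sm α, ¬ E u v) (k * t) _ _
        fun α => (h5 α u hu).1
    · apply hdeg
      rw [← hN]
      exact card_filter_many_mul_le (Vokay G) (fun u α => ∀ v ∈ G.Sp α, ¬ E v u) (k * t) _ _
        fun α => (h5 α u hu).2

end TournamentPartition
end

section
/- Let T, the constants, and a gadget system satisfying (G1)–(G9) be as in the context. Then there is a subset A₂ ⊆ A₁ of size σ₂kt such that for every α ∈ A₂ and every s ∈ S(α), the vertex s has at least τ₂kt out-neighbours and at least τ₂kt in-neighbours that are available for α with respect to A₂. -/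
open Finset

namespace TournamentPartition

section Rare

open Classical in
/-- At most a proportion `c / N` of the elements of `Ω` satisfy `P`. -/
def Rare {ω : Type*} (Ω : Finset ω) (N c : ℕ) (P : ω → Prop) : Prop :=
  N * (Ω.filter P).card ≤ c * Ω.card

variable {ω : Type*} {Ω : Finset ω} {N c d : ℕ} {P Q : ω → Prop}

lemma rare_iff [DecidablePred P] : Rare Ω N c P ↔ N * (Ω.filter P).card ≤ c * Ω.card := by
  unfold Rare
  convert Iff.rfl

lemma Rare.mono (hQ : Rare Ω N c Q) (h : ∀ x ∈ Ω, P x → Q x) (hcd : c ≤ d) : Rare Ω N d P := by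
  classical
  simp only [rare_iff] at *
  calc N * (Ω.filter P).card ≤ N * (Ω.filter Q).card :=
        Nat.mul_le_mul_left _ (card_le_card fun x hx => by
          rw [mem_filter] at hx ⊢
          exact ⟨hx.1, h x hx.1 hx.2⟩)
    _ ≤ c * Ω.card := hQ
    _ ≤ d * Ω.card := Nat.mul_le_mul_right _ hcd

lemma Rare.or (hP : Rare Ω N c P) (hQ : Rare Ω N d Q) :
    Rare Ω N (c + d) (fun x => P x ∨ Q x) := by
  classical
  simp only [rare_iff] at *
  rw [filter_or]
  calc N * (Ω.filter P ∪ Ω.filter Q).card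
      ≤ N * ((Ω.filter P).card + (Ω.filter Q).card) := Nat.mul_le_mul_left _ (card_union_le _ _)
    _ ≤ (c + d) * Ω.card := by linarith

lemma Rare.exists_mem {α : Type*} (s : Finset α) {R : α → ω → Prop}
    (h : ∀ a ∈ s, Rare Ω N c (R a)) : Rare Ω N (s.card * c) (fun x => ∃ a ∈ s, R a x) := by
  classical
  induction s using Finset.induction_on with
  | empty => simp [Rare]
  | insert a s ha ih =>
    have h1 := (h a (mem_insert_self a s)).or (ih fun b hb => h b (mem_insert_of_mem hb))
    refine h1.mono (fun x _ hx => by simpa using hx) ?_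
    rw [card_insert_of_notMem ha]
    exact le_of_eq (by ring)

lemma ManyIn.mono {α : Type*} {s t : Finset α} {m : ℝ} {P Q : α → Prop} (h : ManyIn s m P)
    (hst : s ⊆ t) (hPQ : ∀ x, P x → Q x) : ManyIn t m Q := by
  obtain ⟨s', h1, h2, h3⟩ := h
  exact ⟨s', h1.trans hst, h2, fun x hx => hPQ x (h3 x hx)⟩

/-- Markov's inequality: if each element of `S` rarely fails `Q`, then it is rare that more than
half of `S` fails `Q`. -/
lemma Rare.not_manyIn {α : Type*} {S : Finset α} {r : ℕ} {Q : ω → α → Prop}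
    (hr : 2 * r ≤ S.card) (h : ∀ u ∈ S, Rare Ω N c (fun x => ¬ Q x u)) :
    Rare Ω N (2 * c) (fun x => ¬ ManyIn S (r : ℝ) (Q x)) := by
  classical
  simp only [rare_iff] at *
  set B := Ω.filter fun x => ¬ ManyIn S (r : ℝ) (Q x)
  have hhalf : ∀ x ∈ B, S.card ≤ 2 * (S.filter fun u => ¬ Q x u).card := by
    intro x hx
    have hx2 := (mem_filter.1 hx).2
    have hlt : (S.filter (Q x)).card < r := by
      by_contra hge
      exact hx2 ⟨S.filter (Q x), filter_subset _ _, by exact_mod_cast not_lt.1 hge,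
        fun u hu => (mem_filter.1 hu).2⟩
    have := card_filter_add_card_filter_not (s := S) (Q x)
    omega
  rcases Nat.eq_zero_or_pos S.card with h0 | hpos
  · have hempty : B = ∅ := by
      refine filter_eq_empty_iff.2 fun x _ hx => hx ⟨∅, empty_subset _, ?_, by simp⟩
      have : r = 0 := by omega
      simp [this]
    rw [hempty]
    simp
  · have hcount : B.card * S.card ≤ 2 * ∑ u ∈ S, (Ω.filter fun x => ¬ Q x u).card := by
      calc B.card * S.card = ∑ x ∈ B, S.card := by simp
        _ ≤ ∑ x ∈ B, 2 * (S.filter fun u => ¬ Q x u).card := sum_le_sum hhalf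
        _ ≤ ∑ x ∈ Ω, 2 * (S.filter fun u => ¬ Q x u).card :=
          sum_le_sum_of_subset (filter_subset _ _)
        _ = 2 * ∑ u ∈ S, (Ω.filter fun x => ¬ Q x u).card := by
          rw [← mul_sum]
          congr 1
          exact sum_card_bipartiteAbove_eq_sum_card_bipartiteBelow (fun x u => ¬ Q x u)
    have hsum : N * ∑ u ∈ S, (Ω.filter fun x => ¬ Q x u).card ≤ S.card * (c * Ω.card) := by
      rw [mul_sum, ← smul_eq_mul (S.card)]
      exact sum_le_card_nsmul _ _ _ h
    refine Nat.le_of_mul_le_mul_left ?_ hpos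
    calc S.card * (N * B.card) = N * (B.card * S.card) := by ring
      _ ≤ N * (2 * ∑ u ∈ S, (Ω.filter fun x => ¬ Q x u).card) := Nat.mul_le_mul_left _ hcount
      _ = 2 * (N * ∑ u ∈ S, (Ω.filter fun x => ¬ Q x u).card) := by ring
      _ ≤ 2 * (S.card * (c * Ω.card)) := Nat.mul_le_mul_left _ hsum
      _ = S.card * (2 * c * Ω.card) := by ring

/-- Fixing two distinct coordinates of a function is `N` times rarer than fixing one of them. -/
lemma rare_apply_eq {κ : Type*} [Fintype κ] [DecidableEq κ] {i j : κ} (hij : j ≠ i)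
    (a b : Fin N) :
    Rare ((univ : Finset (κ → Fin N)).filter fun f => f i = a) N 1 (fun f => f j = b) := by
  classical
  have hcard : N * (((univ : Finset (κ → Fin N)).filter fun f => f i = a).filter
      fun f => f j = b).card = ((univ : Finset (Fin N)) ×ˢ
        ((univ : Finset (κ → Fin N)).filter fun f => f i = a).filter fun f => f j = b).card := by
    rw [card_product, card_univ, Fintype.card_fin]
  rw [rare_iff, one_mul, hcard]
  refine card_le_card_of_injOn (fun p => Function.update p.2 j p.1) ?_ ?_
  · rintro ⟨x, f⟩ hp
    simp only [coe_product, Set.mem_prod, mem_coe, mem_filter, mem_univ, true_and] at hp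
    simpa [Function.update_of_ne hij.symm] using hp.1
  · rintro ⟨x, f⟩ hp ⟨y, g⟩ hq hfg
    simp only [coe_product, Set.mem_prod, mem_coe, mem_filter, mem_univ, true_and] at hp hq
    dsimp only at hfg
    have hxy : x = y := by simpa using congrFun hfg j
    refine Prod.ext hxy (funext fun l => ?_)
    by_cases hl : l = j
    · subst hl
      exact hp.2.trans hq.2.symm
    · simpa [Function.update_of_ne hl] using congrFun hfg l

end Rare

section Transversal

variable {V I : Type*} [Fintype V] [DecidableEq V] [DecidableEq I] {G : GadgetSystem V I} {N : ℕ}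

/-- The transversal of the blocks `e (j, ·)` picked out by `f`, without the block of `i`. -/
def transversalErase {κ : Type*} [Fintype κ] [DecidableEq κ] (e : κ × Fin N ≃ I)
    (f : κ → Fin N) (i : κ) : Finset I :=
  (univ.erase i).image fun j => e (j, f j)

lemma rare_notMem_Wof_transversalErase {κ : Type*} [Fintype κ] [DecidableEq κ]
    (e : κ × Fin N ≃ I) (h1 : CondG1 G) (i : κ) (a : Fin N) (u : V) :
    Rare ((univ : Finset (κ → Fin N)).filter fun f => f i = a) N 1
      (fun f => u ∉ Wof G (transversalErase e f i)) := by
  have hmem : ∀ f : κ → Fin N, u ∉ Wof G (transversalErase e f i) →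
      ∃ j, j ≠ i ∧ u ∈ G.U (e (j, f j)) := by
    intro f hf
    simpa [Wof, transversalErase] using hf
  by_cases hu : ∃ j b, j ≠ i ∧ u ∈ G.U (e (j, b))
  · obtain ⟨j, b, hji, hub⟩ := hu
    refine (rare_apply_eq hji a b).mono (fun f _ hf => ?_) le_rfl
    obtain ⟨l, -, hul⟩ := hmem f hf
    by_contra hne
    refine disjoint_left.1 (h1 (e (l, f l)) (e (j, b)) fun h => ?_) hul hub
    have := e.injective h
    simp only [Prod.mk.injEq] at this
    obtain ⟨rfl, h2⟩ := this
    exact hne h2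
  · rw [rare_iff, filter_eq_empty_iff.2]
    · simp
    · intro f _ hf
      obtain ⟨j, hj⟩ := hmem f hf
      exact hu ⟨j, f j, hj⟩

end Transversal

lemma two_mul_le_card_of_max_le {V : Type*} {S : Finset V} {k t τ₁ τ₂ : ℕ} {x : ℝ}
    (hτ : 4 * τ₂ ≤ τ₁)
    (h : max x (((τ₁ * k * t : ℕ) : ℝ) / 2) ≤ (S.card : ℝ)) : 2 * (τ₂ * k * t) ≤ S.card := by
  have h1 : ((τ₁ * k * t : ℕ) : ℝ) ≤ ((2 * S.card : ℕ) : ℝ) := by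
    have := (le_max_right _ _).trans h
    push_cast at this ⊢
    linarith
  have h2 : τ₁ * k * t ≤ 2 * S.card := by exact_mod_cast h1
  have h3 : 4 * τ₂ * k * t ≤ τ₁ * k * t :=
    Nat.mul_le_mul_right _ (Nat.mul_le_mul_right _ hτ)
  have h4 : 4 * τ₂ * k * t = 4 * (τ₂ * k * t) := by ring
  omega

section Availability

variable {V I : Type*} [Fintype V] [DecidableEq V] [Fintype I]
  {E : V → V → Prop} [DecidableRel E] {G : GadgetSystem V I} {k t τ₁ τ₂ : ℕ}

lemma AvailA1.mono {W W' : Finset V} (h : W ⊆ W') {u : V} (hu : AvailA1 E G k t W u) :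
    AvailA1 E G k t W' u :=
  inter_subset_inter_left h hu

lemma AvailA2.mono {W W' : Finset V} (h : W ⊆ W') {u : V} (hu : AvailA2 E G k t τ₂ W u) :
    AvailA2 E G k t τ₂ W' u :=
  ⟨inter_subset_inter_left h hu.1, hu.2.mono subset_rfl fun _ => AvailA1.mono h⟩

lemma Available.mono {W W' : Finset V} (h : W ⊆ W') {u : V} (hu : Available E G k t τ₂ W u) :
    Available E G k t τ₂ W' u := by
  have h12 : ∀ v, AvailA1 E G k t W v ∨ AvailA2 E G k t τ₂ W v →
      AvailA1 E G k t W' v ∨ AvailA2 E G k t τ₂ W' v :=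
    fun v => Or.imp (AvailA1.mono h) (AvailA2.mono h)
  rcases hu with hu | hu | hu | hu
  · exact .inl (hu.mono h)
  · exact .inr (.inl (hu.mono h))
  · exact .inr (.inr (.inl ⟨inter_subset_inter_left h hu.1, hu.2.mono subset_rfl h12⟩))
  · exact .inr (.inr (.inr ⟨inter_subset_inter_left h hu.1, hu.2.1.mono subset_rfl h12,
      hu.2.2.mono subset_rfl fun _ => AvailA1.mono h⟩))

variable {ω : Type*} {Ω : Finset ω} {N : ℕ} {W : ω → Finset V}

lemma rare_not_manyIn_availA1 (hτ : 4 * τ₂ ≤ τ₁) (h8 : CondG8 E G k t τ₁)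
    (hW : ∀ u, Rare Ω N 1 (fun x => u ∉ W x)) {u : V} (hu : u ∈ Vokay G) :
    Rare Ω N 2 (fun x => ¬ ManyIn (inN E u) ((τ₂ * k * t : ℕ) : ℝ) (AvailA1 E G k t (W x))) := by
  have := Rare.not_manyIn (Q := fun x v => AvailA1 E G k t (W x) v)
    (two_mul_le_card_of_max_le hτ (h8 u hu)) fun v hv =>
      (hW v).mono (fun x _ hx hvW => hx (mem_inter.2 ⟨(mem_inter.1 hv).2, hvW⟩)) le_rfl
  exact this.mono (fun x _ hx hm => hx (hm.mono inter_subset_left fun _ => id)) le_rfl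

lemma rare_not_availA1_or_availA2 (hτ : 4 * τ₂ ≤ τ₁) (h8 : CondG8 E G k t τ₁)
    (hW : ∀ u, Rare Ω N 1 (fun x => u ∉ W x)) {u : V} (hu : u ∈ VgoodP E G k t) :
    Rare Ω N 3 (fun x => ¬ (AvailA1 E G k t (W x) u ∨ AvailA2 E G k t τ₂ (W x) u)) := by
  refine ((hW u).or (rare_not_manyIn_availA1 hτ h8 hW (sdiff_subset hu))).mono ?_ le_rfl
  intro x _ hx
  by_contra! hc
  refine hx ?_
  by_cases hm : u ∈ VgoodM E G k t
  · exact .inl (mem_inter.2 ⟨mem_inter.2 ⟨hu, hm⟩, hc.1⟩)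
  · exact .inr ⟨mem_inter.2 ⟨mem_sdiff.2 ⟨hu, hm⟩, hc.1⟩, hc.2⟩

lemma rare_not_manyIn_availA1_or_availA2 (hτ : 4 * τ₂ ≤ τ₁) (h7 : CondG7 E G k t τ₁)
    (h8 : CondG8 E G k t τ₁) (hW : ∀ u, Rare Ω N 1 (fun x => u ∉ W x)) {u : V}
    (hu : u ∈ Vokay G) :
    Rare Ω N 6 (fun x => ¬ ManyIn (outN E u) ((τ₂ * k * t : ℕ) : ℝ)
      (fun v => AvailA1 E G k t (W x) v ∨ AvailA2 E G k t τ₂ (W x) v)) := by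
  have := Rare.not_manyIn
    (Q := fun x v => AvailA1 E G k t (W x) v ∨ AvailA2 E G k t τ₂ (W x) v)
    (two_mul_le_card_of_max_le hτ (h7 u hu)) fun v hv =>
      rare_not_availA1_or_availA2 hτ h8 hW (mem_inter.1 hv).2
  exact this.mono (fun x _ hx hm => hx (hm.mono inter_subset_left fun _ => id)) le_rfl

lemma rare_not_available (hτ : 4 * τ₂ ≤ τ₁) (h7 : CondG7 E G k t τ₁) (h8 : CondG8 E G k t τ₁)
    (hW : ∀ u, Rare Ω N 1 (fun x => u ∉ W x)) {u : V} (hu : u ∈ Vokay G) :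
    Rare Ω N 9 (fun x => ¬ Available E G k t τ₂ (W x) u) := by
  refine (((hW u).or (rare_not_manyIn_availA1 hτ h8 hW hu)).or
    (rare_not_manyIn_availA1_or_availA2 hτ h7 h8 hW hu)).mono ?_ le_rfl
  intro x _ hx
  by_contra! hc
  obtain ⟨⟨hW', hin⟩, hout⟩ := hc
  refine hx ?_
  by_cases hp : u ∈ VgoodP E G k t <;> by_cases hm : u ∈ VgoodM E G k t
  · exact .inl (mem_inter.2 ⟨mem_inter.2 ⟨hp, hm⟩, hW'⟩)
  · exact .inr (.inl ⟨mem_inter.2 ⟨mem_sdiff.2 ⟨hp, hm⟩, hW'⟩, hin⟩)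
  · exact .inr (.inr (.inl ⟨mem_inter.2 ⟨mem_sdiff.2 ⟨hm, hp⟩, hW'⟩, hout⟩))
  · refine .inr (.inr (.inr ⟨mem_inter.2 ⟨mem_inter.2 ⟨?_, ?_⟩, hW'⟩, hout, hin⟩))
    · by_contra h
      exact hp (mem_sdiff.2 ⟨hu, h⟩)
    · by_contra h
      exact hm (mem_sdiff.2 ⟨hu, h⟩)

/-- `s` has at least `τ₂kt` out-neighbours and in-neighbours available in `W`. -/
def ManyAvailable (E : V → V → Prop) [DecidableRel E] (G : GadgetSystem V I) (k t τ₂ : ℕ)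
    (W : Finset V) (s : V) : Prop :=
  ManyIn (outN E s) ((τ₂ * k * t : ℕ) : ℝ) (Available E G k t τ₂ W) ∧
    ManyIn (inN E s) ((τ₂ * k * t : ℕ) : ℝ) (Available E G k t τ₂ W)

lemma rare_not_manyAvailable (hτ : 4 * τ₂ ≤ τ₁) (h7 : CondG7 E G k t τ₁)
    (h8 : CondG8 E G k t τ₁) (h9 : CondG9 E G k t τ₁)
    (hW : ∀ u, Rare Ω N 1 (fun x => u ∉ W x)) (s : V) :
    Rare Ω N 36 (fun x => ¬ ManyAvailable E G k t τ₂ (W x) s) := by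
  have hout := Rare.not_manyIn (Q := fun x v => Available E G k t τ₂ (W x) v)
    (two_mul_le_card_of_max_le hτ (h9 s).1) fun v hv =>
      rare_not_available hτ h7 h8 hW (mem_inter.1 hv).2
  have hin := Rare.not_manyIn (Q := fun x v => Available E G k t τ₂ (W x) v)
    (two_mul_le_card_of_max_le hτ (h9 s).2) fun v hv =>
      rare_not_available hτ h7 h8 hW (mem_inter.1 hv).2
  refine (hout.or hin).mono ?_ le_rfl
  intro x _ hx
  by_contra! hc
  exact hx ⟨hc.1.mono inter_subset_left fun _ => id, hc.2.mono inter_subset_left fun _ => id⟩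

lemma exists_transversal [DecidableEq I] {n r : ℕ} (hN : 2 * (r * 36) ≤ N) (hN0 : 0 < N)
    (e : Fin (2 * n) × Fin N ≃ I) (hτ : 4 * τ₂ ≤ τ₁) (h1 : CondG1 G)
    (hS : ∀ α, (G.S α).card ≤ r) (h7 : CondG7 E G k t τ₁) (h8 : CondG8 E G k t τ₁)
    (h9 : CondG9 E G k t τ₁) :
    ∃ f : Fin (2 * n) → Fin N, ∃ J : Finset (Fin (2 * n)), J.card = n ∧ ∀ i ∈ J,
      ∀ s ∈ G.S (e (i, f i)), ManyAvailable E G k t τ₂ (Wof G (transversalErase e f i)) s := by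
  classical
  have : NeZero N := ⟨hN0.ne'⟩
  set fails : Fin (2 * n) → (Fin (2 * n) → Fin N) → Prop := fun i f =>
    ∃ s ∈ G.S (e (i, f i)), ¬ ManyAvailable E G k t τ₂ (Wof G (transversalErase e f i)) s
  have hrare : ∀ i, Rare univ N (r * 36) (fails i) := by
    intro i
    have hcond : ∀ a, Rare ((univ : Finset (Fin (2 * n) → Fin N)).filter fun f => f i = a) N
        (r * 36) (fails i) := by
      intro a
      refine (Rare.exists_mem (G.S (e (i, a))) fun s _ =>
        rare_not_manyAvailable hτ h7 h8 h9 (rare_notMem_Wof_transversalErase e h1 i a) s).mono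
          (fun f hf hfail => ?_) (Nat.mul_le_mul_right _ (hS _))
      obtain rfl := (mem_filter.1 hf).2
      exact hfail
    simp only [rare_iff] at hcond ⊢
    have h2 := card_eq_sum_card_fiberwise (s := univ.filter (fails i)) (t := univ)
      (f := fun f : Fin (2 * n) → Fin N => f i) (fun _ _ => mem_coe.2 (mem_univ _))
    have h3 := card_eq_sum_card_fiberwise (s := (univ : Finset (Fin (2 * n) → Fin N)))
      (t := univ) (f := fun f => f i) (fun _ _ => mem_coe.2 (mem_univ _))
    rw [h2, h3, mul_sum, mul_sum]
    refine sum_le_sum fun a _ => ?_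
    rw [filter_comm]
    exact hcond a
  obtain ⟨f, hf⟩ : ∃ f, (univ.filter fun i => fails i f).card ≤ n := by
    by_contra! hc
    have hdouble := sum_card_bipartiteAbove_eq_sum_card_bipartiteBelow
      (s := (univ : Finset (Fin (2 * n) → Fin N))) (t := (univ : Finset (Fin (2 * n))))
      (fun f i => fails i f)
    set c := (univ : Finset (Fin (2 * n) → Fin N)).card with hcdef
    have hcpos : 0 < c := card_pos.2 univ_nonempty
    have hlower : c * (n + 1) ≤ ∑ f, (univ.filter fun i => fails i f).card := by
      rw [← smul_eq_mul, hcdef]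
      exact card_nsmul_le_sum _ _ _ fun f _ => hc f
    have hupper : N * ∑ i, (univ.filter fun f => fails i f).card
        ≤ 2 * n * (r * 36 * c) := by
      have := sum_le_card_nsmul (univ : Finset (Fin (2 * n))) _ _ fun i _ =>
        rare_iff.1 (hrare i)
      rwa [← mul_sum, smul_eq_mul, card_univ, Fintype.card_fin] at this
    have hlow' : c * (n + 1) ≤ ∑ i, (univ.filter fun f => fails i f).card :=
      hlower.trans_eq hdouble
    have h4 : N * (c * (n + 1)) ≤ N * (n * c) :=
      calc N * (c * (n + 1)) ≤ 2 * n * (r * 36 * c) :=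
            (Nat.mul_le_mul_left _ hlow').trans hupper
        _ = 2 * (r * 36) * (n * c) := by ring
        _ ≤ N * (n * c) := Nat.mul_le_mul_right _ hN
    have h5 := Nat.le_of_mul_le_mul_left h4 hN0
    nlinarith
  have hgood : n ≤ (univ.filter fun i => ¬ fails i f).card := by
    have := card_filter_add_card_filter_not (s := univ) (fun i => fails i f)
    rw [card_univ, Fintype.card_fin] at this
    omega
  obtain ⟨J, hJ, hJn⟩ := exists_subset_card_eq hgood
  refine ⟨f, J, hJn, fun i hi s hs => ?_⟩
  by_contra hbad
  exact (mem_filter.1 (hJ hi)).2 ⟨s, hs, hbad⟩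

end Availability

/-- Proposition 4.5: many available neighbours. -/
theorem statement6 :
    ∃ C : ℕ, ∀ (τ₁ τ₂ k t : ℕ), C ≤ τ₂ → C * τ₂ ≤ τ₁ → C * τ₁ ≤ k → 2 ≤ t →
      ∀ (V : Type) [Fintype V] [DecidableEq V] (E : V → V → Prop) [DecidableRel E],
        IsTournament E → StronglyKConnected E (τ₁ * k * t) →
        ∀ G : GadgetSystem V (Fin (sigma1 * k * t)),
          GadgetHyp E G k t → GadgetHyp2 E G k t τ₁ →
          ∃ 𝒜₂ : Finset (Fin (sigma1 * k * t)),
            𝒜₂.card = sigma2 * k * t ∧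
            ∀ α ∈ 𝒜₂, ∀ s ∈ G.S α,
              ManyIn (outN E s) ((τ₂ * k * t : ℕ) : ℝ)
                (Available E G k t τ₂ (Wof G (𝒜₂.erase α))) ∧
              ManyIn (inN E s) ((τ₂ * k * t : ℕ) : ℝ)
                (Available E G k t τ₂ (Wof G (𝒜₂.erase α))) := by
  refine ⟨4, fun τ₁ τ₂ k t _ hτ _ _ V _ _ E _ _ _ G hG hG' => ?_⟩
  obtain ⟨h1, h2, -⟩ := hG
  obtain ⟨-, h7, h8, h9⟩ := hG'
  have hcard : 2 * (sigma2 * k * t) * (5 * 10 ^ 55) = sigma1 * k * t := by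
    unfold sigma1 sigma2
    ring
  let e : Fin (2 * (sigma2 * k * t)) × Fin (5 * 10 ^ 55) ≃ Fin (sigma1 * k * t) :=
    finProdFinEquiv.trans (finCongr hcard)
  obtain ⟨f, J, hJ, hgood⟩ := exists_transversal (r := rho) (by norm_num [rho]) (by norm_num)
    e hτ h1 (fun α => (h2 α).1) h7 h8 h9
  have hinj : Function.Injective fun i => e (i, f i) := fun i j hij =>
    congrArg Prod.fst (e.injective hij)
  refine ⟨J.image fun i => e (i, f i), by rw [card_image_of_injective _ hinj, hJ], ?_⟩
  intro α hα s hs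
  obtain ⟨i, hi, rfl⟩ := mem_image.1 hα
  have hW : Wof G (transversalErase e f i) ⊆
      Wof G ((J.image fun i => e (i, f i)).erase (e (i, f i))) := by
    refine sdiff_subset_sdiff subset_rfl (biUnion_subset_biUnion_of_subset_left _ ?_)
    rw [← image_erase hinj]
    exact image_subset_image (erase_subset_erase _ (subset_univ _))
  have h := hgood i hi s hs
  exact ⟨h.1.mono subset_rfl fun _ => Available.mono hW,
    h.2.mono subset_rfl fun _ => Available.mono hW⟩

end TournamentPartition
end
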